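/- arXiv:2509.03777 — 2 statements merged into one kernel-verified Lean document; each statement's English description precedes it below -/
import Mathlib

section
/- Let Ω ⊆ ℂ be a nonempty bounded open connected set with interior (closure Ω) = Ω. Then the following are equivalent. (i) Ω is a quadrature domain: there exist n ≥ 1, points a₁, …, aₙ ∈ Ω, integers m₁, …, mₙ ≥ 0, and complex coefficients c_{k,j} (1 ≤ k ≤ n, 0 ≤ j ≤ m_k) such that for every f ∈ A(Ω), ∫_Ω f dλ = Σ_{k=1}^{n} Σ_{j=0}^{m_k} c_{k,j} · f^{(j)}(a_k). (ii) Ω admits a Schwarz function: there exist a function S : ℂ → ℂ and a finite set P ⊆ Ω such that S is complex-differentiable on Ω ∖ P, every point of P is a pole or removable singularity of S (so S is meromorphic on Ω), S is continuous on (closure Ω) ∖ P, and S(w) = conj(w) for every w in the frontier of Ω. -/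
/-!
Both implications compare the quadrature functional with a Stokes formula on `Ω`.

**From a Schwarz function to a quadrature identity.** Put `g z = conj z - S z`, so that `∂̄g = 1`
away from the poles and `g = 0` on the frontier. Let `e` be a cutoff function that vanishes near
the poles of `S` and is `1` away from them. Formally, Stokes' theorem for `f e g` has no boundary
term and gives `∫ f e = -∫ f g ∂̄e`. The frontier has no regularity and `S'` no bound near it, so
`g` is replaced by `θₙ(|g|²) g`, where `θₙ` vanishes near `0` and increases to `1`; the truncation
is supported in a compact subset of `Ω` without the poles, where Stokes' theorem is elementary
(`integral_dbar_open`). The error term is dominated by `e (1 + |S'|)`, which is integrable by a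
Caccioppoli estimate (`CutoffSetting.integrable_energy`): apply Stokes' theorem to
`θₙ(|g|²) e² ∂|g|²` and use `∂∂̄|g|² = 1 + |S'|²`. Dominated convergence then gives
`CutoffSetting.integral_eq_zero`. Near a pole, `f S` is integrated against `∂̄` of a bump function,
which only sees finitely many Taylor coefficients of `f` (`integral_pole`); the term with `conj z`
in `f g ∂̄e` makes up for the difference between `∫ f e` and `∫ f`, again by Stokes' theorem.

**From a quadrature identity to a Schwarz function.** Let `C z = ∫_Ω dλ(w) / (w - z)` be the Cauchy
transform. It is continuous on the plane, and `C + κ conj` is holomorphic on `Ω`, by the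
Cauchy–Pompeiu formula with constant `κ = ∫ dλ(v) / (|v|² + 1)²`. For `z` outside the closure of
`Ω` the Cauchy kernel is a test function, so `C` equals the rational function `R` obtained by
applying the quadrature functional to the kernel. As `Ω` is the interior of its closure, every
frontier point is a limit of such `z`, so `C = R` on the frontier. Hence
`S = conj + (C - R) / κ` is a Schwarz function.
-/

open MeasureTheory Filter Topology Metric Bornology

noncomputable section

/-- `A(Ω)`: functions continuous on the closure of `Ω` and complex-differentiable on `Ω`. -/
def MemA (Ω : Set ℂ) (f : ℂ → ℂ) : Prop :=
  ContinuousOn f (closure Ω) ∧ ∀ z ∈ Ω, DifferentiableAt ℂ f z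

/-- `Ω` satisfies a (bounded) quadrature identity for the test class `A(Ω)`. -/
def IsBoundedQD (Ω : Set ℂ) : Prop :=
  ∃ n : ℕ, 1 ≤ n ∧ ∃ a : Fin n → ℂ, (∀ k, a k ∈ Ω) ∧ ∃ m : Fin n → ℕ,
    ∃ c : (k : Fin n) → Fin (m k + 1) → ℂ,
      ∀ f : ℂ → ℂ, MemA Ω f →
        ∫ w in Ω, f w = ∑ k : Fin n, ∑ j : Fin (m k + 1),
          c k j * iteratedDeriv (j : ℕ) f (a k)

/-- `Ω` admits a Schwarz function: meromorphic on `Ω` (analytic away from a finite set of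
poles or removable singularities), continuous up to the closure away from the singular set,
and equal to `conj w` on the frontier of `Ω`. -/
def HasSchwarzFunction (Ω : Set ℂ) : Prop :=
  ∃ S : ℂ → ℂ, ∃ P : Finset ℂ, (↑P : Set ℂ) ⊆ Ω ∧
    DifferentiableOn ℂ S (Ω \ ↑P) ∧
    (∀ p ∈ P, ∃ n : ℕ, ∃ L : ℂ,
      Tendsto (fun z => (z - p) ^ n * S z) (𝓝[≠] p) (𝓝 L)) ∧
    ContinuousOn S (closure Ω \ ↑P) ∧
    ∀ w ∈ frontier Ω, S w = (starRingEnd ℂ) w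

/-! ### Wirtinger calculus -/

/-- `W` is real-differentiable at `z` with Wirtinger derivatives `∂W = a` and `∂̄W = b`. -/
def HasWirt (W : ℂ → ℂ) (a b z : ℂ) : Prop :=
  HasFDerivAt W (a • (1 : ℂ →L[ℝ] ℂ) + b • (Complex.conjCLE : ℂ →L[ℝ] ℂ)) z

/-- The Wirtinger derivative `∂̄W = (∂ₓW + i ∂ᵧW) / 2`. -/
def dbar (W : ℂ → ℂ) (z : ℂ) : ℂ :=
  (fderiv ℝ W z 1 + Complex.I * fderiv ℝ W z Complex.I) / 2

open ComplexConjugate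

namespace HasWirt

lemma dbar_eq {W : ℂ → ℂ} {a b z : ℂ} (h : HasWirt W a b z) : dbar W z = b := by
  rw [dbar, HasFDerivAt.fderiv h]
  simp
  linear_combination (a/2 - b/2) * Complex.I_mul_I

lemma of_fderiv {W : ℂ → ℂ} {a b z : ℂ} {L : ℂ →L[ℝ] ℂ} (h : HasFDerivAt W L z)
    (hL : ∀ v, L v = a * v + b * conj v) : HasWirt W a b z :=
  h.congr_fderiv (ContinuousLinearMap.ext fun v => by simp [hL])

lemma of_differentiableAt {W : ℂ → ℂ} {z : ℂ} (h : DifferentiableAt ℝ W z) :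
    HasWirt W ((fderiv ℝ W z 1 - Complex.I * fderiv ℝ W z Complex.I) / 2) (dbar W z) z := by
  refine of_fderiv h.hasFDerivAt fun v => ?_
  have hv : v = v.re • (1:ℂ) + v.im • Complex.I := by
    simp [Complex.re_add_im]
  have h1 : fderiv ℝ W z v = v.re * fderiv ℝ W z 1 + v.im * fderiv ℝ W z Complex.I := by
    conv_lhs => rw [hv]
    rw [map_add, map_smul, map_smul]
    simp
  have h2 : conj v = v.re - v.im * Complex.I := by
    apply Complex.ext <;> simp
  have h3 : v = v.re + v.im * Complex.I := (Complex.re_add_im v).symm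
  rw [h1, h2, dbar]
  generalize fderiv ℝ W z Complex.I = q
  generalize fderiv ℝ W z 1 = p
  linear_combination (-(p - Complex.I * q) / 2) * h3 + v.im * q * Complex.I_mul_I

lemma of_hasDerivAt {W : ℂ → ℂ} {a z : ℂ} (h : HasDerivAt W a z) : HasWirt W a 0 z :=
  of_fderiv (h.hasFDerivAt.restrictScalars ℝ) fun v => by simp [mul_comm]

lemma conj_id (z : ℂ) : HasWirt (fun w => conj w) 0 1 z :=
  of_fderiv (Complex.conjCLE : ℂ →L[ℝ] ℂ).hasFDerivAt fun v => by simp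

lemma star {W : ℂ → ℂ} {a b z : ℂ} (h : HasWirt W a b z) :
    HasWirt (fun w => (starRingEnd ℂ) (W w)) ((starRingEnd ℂ) b) ((starRingEnd ℂ) a) z :=
  of_fderiv ((Complex.conjCLE : ℂ →L[ℝ] ℂ).hasFDerivAt.comp z h) fun v => by simp; ring

lemma add {W V : ℂ → ℂ} {a b c d z : ℂ} (h : HasWirt W a b z) (k : HasWirt V c d z) :
    HasWirt (fun w => W w + V w) (a + c) (b + d) z :=
  of_fderiv (HasFDerivAt.add h k) fun v => by simp; ring

lemma sub {W V : ℂ → ℂ} {a b c d z : ℂ} (h : HasWirt W a b z) (k : HasWirt V c d z) :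
    HasWirt (fun w => W w - V w) (a - c) (b - d) z :=
  of_fderiv (HasFDerivAt.sub h k) fun v => by simp; ring

lemma mul {W V : ℂ → ℂ} {a b c d z : ℂ} (h : HasWirt W a b z) (k : HasWirt V c d z) :
    HasWirt (fun w => W w * V w) (a * V z + W z * c) (b * V z + W z * d) z :=
  of_fderiv (HasFDerivAt.mul h k) fun v => by simp; ring

lemma real_comp {r : ℂ → ℝ} {a b z : ℂ} {t : ℝ → ℝ} {t' : ℝ}
    (h : HasWirt (fun w => (r w : ℂ)) a b z) (ht : HasDerivAt t t' (r z)) :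
    HasWirt (fun w => (t (r w) : ℂ)) (t' * a) (t' * b) z := by
  have h1 : HasFDerivAt r (Complex.reCLM.comp
      (a • (1 : ℂ →L[ℝ] ℂ) + b • (Complex.conjCLE : ℂ →L[ℝ] ℂ))) z := by
    simpa using! Complex.reCLM.hasFDerivAt.comp z (show HasFDerivAt _ _ _ from h)
  have h3 := HasFDerivAt.unique h (Complex.ofRealCLM.hasFDerivAt.comp z h1)
  refine of_fderiv (Complex.ofRealCLM.hasFDerivAt.comp z (ht.hasFDerivAt.comp z h1)) fun v => ?_
  have e : a * v + b * (starRingEnd ℂ) v = ((a * v + b * (starRingEnd ℂ) v).re : ℂ) := by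
    simpa using! congrArg (fun L : ℂ →L[ℝ] ℂ => L v) h3
  simp at e ⊢
  linear_combination -(t':ℂ) * e

lemma congr {W V : ℂ → ℂ} {a b z : ℂ} (h : HasWirt W a b z) (e : V =ᶠ[𝓝 z] W) :
    HasWirt V a b z := HasFDerivAt.congr_of_eventuallyEq h e

end HasWirt

lemma dbar_continuous {W : ℂ → ℂ} (h : ContDiff ℝ 1 W) : Continuous (dbar W) := by
  have h1 := h.continuous_fderiv one_ne_zero
  unfold dbar
  fun_prop

lemma dbar_of_eventually_const {W : ℂ → ℂ} {z c : ℂ} (h : ∀ᶠ w in 𝓝 z, W w = c) :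
    dbar W z = 0 := by
  have : W =ᶠ[𝓝 z] fun _ => c := h
  simp [dbar, this.fderiv_eq]

/-- Stokes' theorem without boundary term: the `∂̄`-derivative of a compactly supported `C¹`
function has mean zero. -/
lemma integral_dbar_eq_zero {W : ℂ → ℂ} (h : ContDiff ℝ 1 W) (hs : HasCompactSupport W) :
    ∫ z, dbar W z = 0 := by
  have hd : Differentiable ℝ W := h.differentiable one_ne_zero
  have key : ∀ v : ℂ, Integrable (fun z => fderiv ℝ W z v) ∧ ∫ z, fderiv ℝ W z v = 0 := by
    intro v
    have hc : Continuous (fun z => fderiv ℝ W z v) :=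
      (h.continuous_fderiv one_ne_zero).clm_apply continuous_const
    have hi : Integrable (fun z => fderiv ℝ W z v) :=
      hc.integrable_of_hasCompactSupport (hs.fderiv_apply ℝ v)
    refine ⟨hi, ?_⟩
    have := integral_bilinear_hasLineDerivAt_right_eq_neg_left_of_integrable (μ := volume)
      (f := W) (f' := fun z => fderiv ℝ W z v) (g := fun _ : ℂ => (1:ℂ)) (g' := fun _ => 0)
      (v := v) (B := ContinuousLinearMap.mul ℝ ℂ) (by simpa using hi) (by simp)
      (by simpa using h.continuous.integrable_of_hasCompactSupport hs)
      (fun x _ => (hd x).hasFDerivAt.hasLineDerivAt v)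
      (fun x _ => by simpa using (hasFDerivAt_const (𝕜 := ℝ) (1:ℂ) x).hasLineDerivAt v)
    simpa using this
  unfold dbar
  rw [integral_div, integral_add (key 1).1 ((key _).1.const_mul _), integral_const_mul,
    (key 1).2, (key _).2]
  simp

/-- A function that is continuous on a compact set and vanishes off it is integrable. -/
lemma integrable_of_continuousOn_compact {K : Set ℂ} (hK : IsCompact K) {h : ℂ → ℂ}
    (hc : ContinuousOn h K) (h0 : ∀ z ∉ K, h z = 0) : Integrable h := by
  have h1 := hc.integrableOn_compact hK (μ := volume)
  rw [← integrable_indicator_iff hK.measurableSet, Set.indicator_eq_self.2] at h1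
  · exact h1
  · exact fun z hz => by_contra fun hK => hz (h0 z hK)

/-- Stokes' theorem on an open set `U`, for a function supported in a compact subset of `U` whose
`∂̄`-derivative is given by an explicit formula on `U`. -/
lemma integral_dbar_open {U K : Set ℂ} (hU : IsOpen U) (hK : IsCompact K) (hKU : K ⊆ U)
    {W b : ℂ → ℂ} (hW : ContDiffOn ℝ 1 W U) (h0 : ∀ z ∈ U \ K, W z = 0)
    (hb : ∀ z ∈ U, ∃ a, HasWirt W a (b z) z) :
    ∫ z in U, b z = 0 := by
  classical
  have e1 : ∀ z ∈ U, U.indicator W =ᶠ[𝓝 z] W := fun z hz => by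
    filter_upwards [hU.mem_nhds hz] with w hw using by simp [hw]
  have e2 : ∀ z ∉ K, U.indicator W =ᶠ[𝓝 z] fun _ => 0 := fun z hz => by
    filter_upwards [hK.isClosed.isOpen_compl.mem_nhds hz] with w hw
    by_cases hwU : w ∈ U
    · simp [hwU, h0 w ⟨hwU, hw⟩]
    · simp [hwU]
  have hC : ContDiff ℝ 1 (U.indicator W) := by
    rw [contDiff_iff_contDiffAt]
    intro z
    by_cases hz : z ∈ K
    · exact ((hW.contDiffAt (hU.mem_nhds (hKU hz))).congr_of_eventuallyEq (e1 z (hKU hz)))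
    · exact contDiffAt_const.congr_of_eventuallyEq (e2 z hz)
  have hS : HasCompactSupport (U.indicator W) :=
    HasCompactSupport.intro hK fun z hz => (e2 z hz).eq_of_nhds
  rw [← integral_dbar_eq_zero hC hS, ← integral_indicator hU.measurableSet]
  congr 1
  ext z
  by_cases hz : z ∈ U
  · obtain ⟨a, ha⟩ := hb z hz
    simp [hz, (ha.congr (e1 z hz)).dbar_eq]
  · simp [hz, dbar_of_eventually_const (e2 z (fun h => hz (hKU h)))]

/-! ### The zero set of the defect, and truncation functions -/

lemma integrableOn_of_continuousOn_compact {E : Type*} [NormedAddCommGroup E] {U K : Set ℂ}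
    (hU : IsOpen U) (hK : IsCompact K) {h : ℂ → E}
    (hc : ContinuousOn h K) (h0 : ∀ z ∈ U \ K, h z = 0) : IntegrableOn h U :=
  (hc.integrableOn_compact hK).of_forall_sdiff_eq_zero hU.measurableSet h0

/-- If `∂̄g = 1` on `U`, then `g` vanishes only on a null subset of `U`: the derivative of `g`
would be zero at the density points of the zero set. -/
lemma ae_ne_zero_of_hasWirt {U : Set ℂ} (hU : IsOpen U) {g a : ℂ → ℂ}
    (hg : ∀ z ∈ U, HasWirt g (a z) 1 z) : ∀ᵐ z ∂(volume.restrict U), g z ≠ 0 := by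
  have hc : ContinuousOn g U := fun z hz =>
    (HasFDerivAt.continuousAt (hg z hz)).continuousWithinAt
  have hm : MeasurableSet (U \ (U ∩ g ⁻¹' {0}ᶜ)) :=
    hU.measurableSet.diff (hc.isOpen_inter_preimage hU isOpen_compl_singleton).measurableSet
  set s := U \ (U ∩ g ⁻¹' {0}ᶜ)
  have hs : ∀ z ∈ s, z ∈ U ∧ g z = 0 := fun z hz => ⟨hz.1, by
    by_contra h; exact hz.2 ⟨hz.1, h⟩⟩
  have h1 : ApproximatesLinearOn g (0 : ℂ →L[ℝ] ℂ) s 0 := by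
    rw [ApproximatesLinearOn]
    intro x hx y hy
    simp [(hs x hx).2, (hs y hy).2]
  have h2 := h1.norm_fderiv_sub_le volume hm _
    (fun x hx => HasFDerivAt.hasFDerivWithinAt (hg x (hs x hx).1))
  have h3 : ∀ᵐ z ∂(volume.restrict s), False := by
    filter_upwards [h2] with z hz
    have h4 : (a z • (1 : ℂ →L[ℝ] ℂ) + (1:ℂ) • (Complex.conjCLE : ℂ →L[ℝ] ℂ)) = 0 := by
      simpa using hz
    have e1 : a z + 1 = 0 := by simpa using congrArg (fun L : ℂ →L[ℝ] ℂ => L 1) h4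
    have e2 : a z * Complex.I - Complex.I = 0 := by
      simpa [sub_eq_add_neg] using congrArg (fun L : ℂ →L[ℝ] ℂ => L Complex.I) h4
    have e3 : (2:ℂ) * Complex.I = 0 := by linear_combination Complex.I * e1 - e2
    simp at e3
  have h5 : volume s = 0 := by
    simpa [Filter.eventually_false_iff_eq_bot] using h3
  rw [ae_restrict_iff' hU.measurableSet]
  filter_upwards [measure_eq_zero_iff_ae_notMem.1 h5] with z hz hzU h
  exact hz ⟨hzU, fun h' => h'.2 h⟩

/-- Smooth monotone cutoffs `θ n`, with derivatives `θ' n`, that vanish on `[0, 1/(n+1))`, tend to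
`1` on `(0, ∞)`, and satisfy the scale-invariant bound `s * θ' n s ≤ C`. -/
lemma exists_cutoffs : ∃ (C : ℝ) (θ θ' : ℕ → ℝ → ℝ), 0 ≤ C ∧ (∀ n, ContDiff ℝ 1 (θ n)) ∧
    (∀ n s, HasDerivAt (θ n) (θ' n s) s) ∧ (∀ n s, 0 ≤ θ' n s) ∧ (∀ n, Continuous (θ' n)) ∧
    (∀ n s, 0 ≤ θ n s) ∧ (∀ n s, θ n s ≤ 1) ∧
    (∀ n : ℕ, ∀ s : ℝ, s < 1 / (n + 1) → θ n s = 0 ∧ θ' n s = 0) ∧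
    (∀ s : ℝ, 0 < s → ∀ᶠ n in atTop, θ n s = 1 ∧ θ' n s = 0) ∧
    (∀ n s, 0 ≤ s → s * θ' n s ≤ C) := by
  have hcd : ContDiff ℝ 1 Real.smoothTransition := Real.smoothTransition.contDiff (n := 1)
  have hd0 : ∀ x < 0, deriv Real.smoothTransition x = 0 := fun x hx => by
    have : Real.smoothTransition =ᶠ[𝓝 x] fun _ => 0 := by
      filter_upwards [Iio_mem_nhds hx] with y hy
      exact Real.smoothTransition.zero_of_nonpos (le_of_lt hy)
    simp [this.deriv_eq]
  have hd1 : ∀ x > 1, deriv Real.smoothTransition x = 0 := fun x hx => by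
    have : Real.smoothTransition =ᶠ[𝓝 x] fun _ => 1 := by
      filter_upwards [Ioi_mem_nhds hx] with y hy
      exact Real.smoothTransition.one_of_one_le (le_of_lt hy)
    simp [this.deriv_eq]
  have hdc : Continuous (deriv Real.smoothTransition) := hcd.continuous_deriv le_rfl
  have hdp : ∀ x, 0 ≤ deriv Real.smoothTransition x := fun x =>
    Real.smoothTransition.monotone.deriv_nonneg
  obtain ⟨C, hC⟩ := (isCompact_Icc (a := (0:ℝ)) (b := 1)).exists_bound_of_continuousOn
    (f := fun x => (x + 1) * deriv Real.smoothTransition x) (by fun_prop)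
  have hC0 : 0 ≤ C := (norm_nonneg _).trans (hC 0 (by simp))
  refine ⟨C, fun n s => Real.smoothTransition (s * (n + 1) - 1),
    fun n s => deriv Real.smoothTransition (s * (n + 1) - 1) * (n + 1), hC0, ?_, ?_, ?_, ?_, ?_,
    ?_, ?_, ?_, ?_⟩
  · intro n
    exact hcd.comp (by fun_prop)
  · intro n s
    have h1 : HasDerivAt (fun s : ℝ => s * ((n:ℝ) + 1) - 1) ((n:ℝ) + 1) s := by
      simpa using ((hasDerivAt_id s).mul_const ((n:ℝ) + 1)).sub_const 1
    exact ((hcd.differentiable one_ne_zero _).hasDerivAt).comp s h1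
  · intro n s
    have := hdp (s * (n + 1) - 1)
    positivity
  · intro n
    fun_prop
  · exact fun n s => Real.smoothTransition.nonneg _
  · exact fun n s => Real.smoothTransition.le_one _
  · intro n s hs
    have : s * (n + 1) - 1 < 0 := by
      rw [lt_div_iff₀ (by positivity)] at hs; linarith
    exact ⟨Real.smoothTransition.zero_of_nonpos this.le, by simp [hd0 _ this]⟩
  · intro s hs
    obtain ⟨m, hm⟩ := exists_nat_gt (2 / s)
    filter_upwards [eventually_ge_atTop m] with n hn
    have h2 : (m:ℝ) ≤ n := by exact_mod_cast hn
    have : 1 < s * (n + 1) - 1 := by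
      rw [div_lt_iff₀ hs] at hm; nlinarith
    exact ⟨Real.smoothTransition.one_of_one_le this.le, by simp [hd1 _ this]⟩
  · intro n s hs
    by_cases h0 : s * (n + 1) - 1 < 0
    · simp [hd0 _ h0, hC0]
    by_cases h1 : s * (n + 1) - 1 > 1
    · simp [hd1 _ h1, hC0]
    push Not at h0 h1
    have := (le_abs_self _).trans (hC _ ⟨h0, h1⟩)
    linarith

/-! ### Stokes' formula for a Schwarz function -/

/-- The difference `z ↦ conj z - S z`; a Schwarz function `S` makes it vanish on the frontier. -/
def defect (S : ℂ → ℂ) (z : ℂ) : ℂ := conj z - S z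

/-- The situation in which Stokes' formula is proved. Here `C` plays the role of the closure of
`Ω`, `U` that of `Ω` without the poles of `S`, `O` that of a neighbourhood of the poles, and `e` is
a real cutoff function that vanishes on `O` and whose derivative `∂̄e` lives on a compact subset
`K` of `U`. -/
structure CutoffSetting (U C O K : Set ℂ) (S : ℂ → ℂ) (e : ℂ → ℝ) : Prop where
  isOpen_U : IsOpen U
  isCompact_C : IsCompact C
  isOpen_O : IsOpen O
  isCompact_K : IsCompact K
  U_sub : U ⊆ C
  K_sub : K ⊆ U
  diff_S : DifferentiableOn ℂ S U
  cont_S : ContinuousOn S (C \ O)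
  eq_conj : ∀ z ∈ C \ O, z ∉ U → S z = conj z
  contDiff_e : ContDiff ℝ 1 e
  e_zero : ∀ z ∈ O, e z = 0
  dbar_zero : ∀ z ∉ K, dbar (fun z => (e z : ℂ)) z = 0

namespace CutoffSetting

variable {U C O K : Set ℂ} {S : ℂ → ℂ} {e : ℂ → ℝ}

lemma contDiffOn_S (H : CutoffSetting U C O K S e) : ContDiffOn ℝ 1 S U :=
  (H.diff_S.contDiffOn H.isOpen_U (n := 1)).restrict_scalars ℝ

lemma contDiffOn_deriv_S (H : CutoffSetting U C O K S e) : ContDiffOn ℝ 1 (deriv S) U :=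
  ((H.diff_S.deriv H.isOpen_U).contDiffOn H.isOpen_U (n := 1)).restrict_scalars ℝ

lemma contDiffOn_conj {W : ℂ → ℂ} (h : ContDiffOn ℝ 1 W U) :
    ContDiffOn ℝ 1 (fun z => conj (W z)) U :=
  (Complex.conjCLE : ℂ →L[ℝ] ℂ).contDiff.comp_contDiffOn h

lemma contDiffOn_defect (H : CutoffSetting U C O K S e) : ContDiffOn ℝ 1 (defect S) U :=
  (contDiffOn_conj contDiffOn_id).sub H.contDiffOn_S

lemma contDiffOn_normSq (H : CutoffSetting U C O K S e) :
    ContDiffOn ℝ 1 (fun z => Complex.normSq (defect S z)) U := by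
  have h := H.contDiffOn_defect
  have h1 : ContDiffOn ℝ 1 (fun z => (defect S z * conj (defect S z)).re) U :=
    Complex.reCLM.contDiff.comp_contDiffOn (h.mul (contDiffOn_conj h))
  simpa [Complex.mul_conj] using! h1

lemma contDiff_coe_e (H : CutoffSetting U C O K S e) : ContDiff ℝ 1 (fun z => (e z : ℂ)) :=
  Complex.ofRealCLM.contDiff.comp H.contDiff_e

lemma hasWirt_S (H : CutoffSetting U C O K S e) {z : ℂ} (hz : z ∈ U) :
    HasWirt S (deriv S z) 0 z :=
  .of_hasDerivAt (H.diff_S.differentiableAt (H.isOpen_U.mem_nhds hz)).hasDerivAt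

lemma hasWirt_deriv_S (H : CutoffSetting U C O K S e) {z : ℂ} (hz : z ∈ U) :
    HasWirt (deriv S) (deriv (deriv S) z) 0 z :=
  .of_hasDerivAt ((H.diff_S.deriv H.isOpen_U).differentiableAt (H.isOpen_U.mem_nhds hz)).hasDerivAt

lemma hasWirt_defect (H : CutoffSetting U C O K S e) {z : ℂ} (hz : z ∈ U) :
    HasWirt (defect S) (-deriv S z) 1 z := by
  simpa using! (HasWirt.conj_id z).sub (H.hasWirt_S hz)

lemma hasWirt_e (H : CutoffSetting U C O K S e) (z : ℂ) :
    ∃ a, HasWirt (fun z => (e z : ℂ)) a (dbar (fun z => (e z : ℂ)) z) z :=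
  ⟨_, .of_differentiableAt (H.contDiff_coe_e.differentiable one_ne_zero z)⟩

lemma hasWirt_cutoff (H : CutoffSetting U C O K S e) {z : ℂ} (hz : z ∈ U) {t : ℝ → ℝ} {t' : ℝ}
    (ht : HasDerivAt t t' (Complex.normSq (defect S z))) :
    ∃ a, HasWirt (fun z => (t (Complex.normSq (defect S z)) : ℂ)) a
      (t' * (conj (defect S z) - defect S z * conj (deriv S z))) z := by
  have h := H.hasWirt_defect hz
  have h1 := h.mul h.star
  rw [funext fun w => Complex.mul_conj (defect S w)] at h1
  have h2 := h1.real_comp ht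
  refine ⟨_, by convert h2 using 1; simp [sub_eq_add_neg]⟩

/-- The level sets on which the truncations live are compact in `U`, because the defect vanishes
on the rest of `C \ O`. -/
lemma compact_level (H : CutoffSetting U C O K S e) {δ : ℝ} (hδ : 0 < δ) :
    IsCompact {z ∈ C \ O | δ ≤ Complex.normSq (defect S z)} ∧
      {z ∈ C \ O | δ ≤ Complex.normSq (defect S z)} ⊆ U := by
  constructor
  · have hc : IsCompact (C \ O) := H.isCompact_C.diff H.isOpen_O
    have hd : ContinuousOn (fun z => Complex.normSq (defect S z)) (C \ O) :=
      Complex.continuous_normSq.comp_continuousOn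
        ((Complex.continuous_conj.continuousOn).sub H.cont_S)
    exact hc.of_isClosed_subset
      (hd.preimage_isClosed_of_isClosed hc.isClosed (isClosed_Ici (a := δ))) Set.inter_subset_left
  · rintro z ⟨hz, h⟩
    by_contra hzU
    simp [defect, H.eq_conj z hz hzU] at h
    linarith

lemma ae_defect_ne_zero (H : CutoffSetting U C O K S e) :
    ∀ᵐ z ∂(volume.restrict U), defect S z ≠ 0 :=
  ae_ne_zero_of_hasWirt H.isOpen_U (fun _ hz => H.hasWirt_defect hz)

/-- A Caccioppoli estimate: since the defect `g = conj z - S z` vanishes on the frontier and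
`∂∂̄|g|² = 1 + |S'|²`, the derivative of `S` is square integrable away from the poles. -/
lemma integrable_energy (H : CutoffSetting U C O K S e) :
    IntegrableOn (fun z => e z ^ 2 * (1 + ‖deriv S z‖ ^ 2)) U := by
  obtain ⟨B, θ, θ', -, hθcd, hθd, hθ'0, hθ'c, hθ0, hθ1, hθs, hθl, -⟩ := exists_cutoffs
  set g := defect S with hg
  set N : ℂ → ℝ := fun z => Complex.normSq (g z) with hN
  set q : ℂ → ℂ := fun z => conj (g z) - g z * conj (deriv S z) with hq
  set d := dbar (fun z => (e z : ℂ)) with hd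
  set h : ℂ → ℝ := fun z => e z ^ 2 * (1 + ‖deriv S z‖ ^ 2) with hh
  have hgc := H.contDiffOn_defect
  have hNc := H.contDiffOn_normSq
  have hec := H.contDiff_coe_e
  have hqc : ContDiffOn ℝ 1 q U :=
    (contDiffOn_conj hgc).sub (hgc.mul (contDiffOn_conj H.contDiffOn_deriv_S))
  have hdc : Continuous d := dbar_continuous hec
  have hhc : ContinuousOn h U :=
    (H.contDiff_e.continuous.continuousOn.pow 2).mul
      (continuousOn_const.add (H.contDiffOn_deriv_S.continuousOn.norm.pow 2))
  have hh0 : ∀ z, 0 ≤ h z := fun z => by positivity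
  set m : ℂ → ℂ := fun z => conj (q z) * (2 * e z * d z) with hm
  have hmc : ContinuousOn m U :=
    (contDiffOn_conj hqc).continuousOn.mul
      ((continuousOn_const.mul hec.continuous.continuousOn).mul hdc.continuousOn)
  have hmi : IntegrableOn m U :=
    integrableOn_of_continuousOn_compact H.isOpen_U H.isCompact_K (hmc.mono H.K_sub)
      (fun z hz => by simp [hm, hd, H.dbar_zero z hz.2])
  -- Stokes' formula for the truncation at level `n` bounds the truncated energy.
  have key : ∀ n, IntegrableOn (fun z => θ n (N z) * h z) U ∧
      ∫ z in U, θ n (N z) * h z ≤ ∫ z in U, ‖m z‖ := by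
    intro n
    obtain ⟨hKc, hKU⟩ := H.compact_level (δ := 1 / ((n:ℝ) + 1)) (by positivity)
    set L := {z ∈ C \ O | 1 / ((n:ℝ) + 1) ≤ Complex.normSq (defect S z)} with hL
    have hoff : ∀ z ∈ U \ L, e z = 0 ∨ (θ n (N z) = 0 ∧ θ' n (N z) = 0) := by
      rintro z ⟨hzU, hzL⟩
      by_cases hzO : z ∈ O
      · exact .inl (H.e_zero z hzO)
      · exact .inr (hθs n _ (by
          by_contra hlt
          exact hzL ⟨⟨H.U_sub hzU, hzO⟩, not_lt.1 hlt⟩))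
    have hθN : ContDiffOn ℝ 1 (fun z => θ n (N z)) U := (hθcd n).comp_contDiffOn hNc
    have hθ'N : ContinuousOn (fun z => θ' n (N z)) U :=
      (hθ'c n).comp_continuousOn hNc.continuousOn
    have hi1 : IntegrableOn (fun z => θ n (N z) * h z) U :=
      integrableOn_of_continuousOn_compact H.isOpen_U hKc
        ((hθN.continuousOn.mul hhc).mono hKU)
        (fun z hz => by rcases hoff z hz with h0 | h0 <;> simp [hh, h0])
    have hi2 : IntegrableOn (fun z => θ' n (N z) * (‖q z‖ ^ 2 * e z ^ 2)) U :=
      integrableOn_of_continuousOn_compact H.isOpen_U hKc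
        ((hθ'N.mul ((hqc.continuousOn.norm.pow 2).mul
          (H.contDiff_e.continuous.continuousOn.pow 2))).mono hKU)
        (fun z hz => by rcases hoff z hz with h0 | h0 <;> simp [h0])
    have hi3 : IntegrableOn (fun z => (θ n (N z) : ℂ) * m z) U :=
      integrableOn_of_continuousOn_compact H.isOpen_U hKc
        (((Complex.continuous_ofReal.comp_continuousOn hθN.continuousOn).mul hmc).mono hKU)
        (fun z hz => by rcases hoff z hz with h0 | h0 <;> simp [hm, h0])
    refine ⟨hi1, ?_⟩
    have hst := integral_dbar_open H.isOpen_U hKc hKU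
      (W := fun z => (θ n (N z) : ℂ) * (conj (q z) * ((e z : ℂ) * e z)))
      (b := fun z => ((θ' n (N z) * (‖q z‖ ^ 2 * e z ^ 2) + θ n (N z) * h z : ℝ) : ℂ)
        + (θ n (N z) : ℂ) * m z)
      ((Complex.ofRealCLM.contDiff.comp_contDiffOn hθN).mul
        ((contDiffOn_conj hqc).mul (hec.mul hec).contDiffOn))
      (fun z hz => by rcases hoff z hz with h0 | h0 <;> simp [h0])
      (fun z hz => by
        obtain ⟨a1, h1⟩ := H.hasWirt_cutoff hz (hθd n (N z))
        obtain ⟨a2, h2⟩ := H.hasWirt_e z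
        have h3 := H.hasWirt_defect hz
        have h4 := h3.star.sub (h3.mul (H.hasWirt_deriv_S hz).star)
        have h5 := h1.mul (h4.star.mul (h2.mul h2))
        refine ⟨_, by
          convert h5 using 1
          have e1 : ((‖q z‖ ^ 2 : ℝ) : ℂ) = q z * conj (q z) := by
            rw [Complex.mul_conj, Complex.normSq_eq_norm_sq]
          have e2 : ((‖deriv S z‖ ^ 2 : ℝ) : ℂ) = deriv S z * conj (deriv S z) := by
            rw [Complex.mul_conj, Complex.normSq_eq_norm_sq]
          simp only [hm, hh, hd, Complex.ofReal_add, Complex.ofReal_mul, e1, e2,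
            Complex.ofReal_pow, Complex.ofReal_one]
          simp only [hq, hN, hg, map_sub, map_add, map_mul, neg_mul, map_neg, Complex.conj_conj,
            map_one, map_zero]
          ring⟩)
    have hi12 : IntegrableOn
        (fun z => θ' n (N z) * (‖q z‖ ^ 2 * e z ^ 2) + θ n (N z) * h z) U := hi2.add hi1
    have hi12' : IntegrableOn (fun z =>
        ((θ' n (N z) * (‖q z‖ ^ 2 * e z ^ 2) + θ n (N z) * h z : ℝ) : ℂ)) U := hi12.ofReal
    rw [integral_add hi12' hi3, integral_complex_ofReal] at hst
    have h6 : ∫ z in U, θ n (N z) * h z ≤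
        ∫ z in U, (θ' n (N z) * (‖q z‖ ^ 2 * e z ^ 2) + θ n (N z) * h z) := by
      refine integral_mono hi1 hi12 fun z => ?_
      have := hθ'0 n (N z)
      exact le_add_of_nonneg_left (by positivity)
    refine h6.trans ((le_abs_self _).trans ?_)
    rw [← Real.norm_eq_abs, ← Complex.norm_real, eq_neg_of_add_eq_zero_left hst, norm_neg]
    refine (norm_integral_le_integral_norm _).trans (integral_mono hi3.norm hmi.norm fun z => ?_)
    simp only [norm_mul, Complex.norm_real, Real.norm_eq_abs, abs_of_nonneg (hθ0 n _)]
    exact mul_le_of_le_one_left (norm_nonneg _) (hθ1 n _)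
  refine ⟨hhc.aestronglyMeasurable H.isOpen_U.measurableSet, ?_⟩
  have hlim : ∀ᵐ z ∂(volume.restrict U),
      Tendsto (fun n => ‖θ n (N z) * h z‖ₑ) atTop (𝓝 ‖h z‖ₑ) := by
    filter_upwards [H.ae_defect_ne_zero] with z hz
    refine tendsto_const_nhds.congr' ?_
    filter_upwards [hθl (N z) (Complex.normSq_pos.2 hz)] with n hn
    simp [hn.1]
  calc ∫⁻ z in U, ‖h z‖ₑ
      = ∫⁻ z in U, liminf (fun n => ‖θ n (N z) * h z‖ₑ) atTop :=
        lintegral_congr_ae (by filter_upwards [hlim] with z hz using hz.liminf_eq.symm)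
    _ ≤ liminf (fun n => ∫⁻ z in U, ‖θ n (N z) * h z‖ₑ) atTop :=
        lintegral_liminf_le' fun n => (key n).1.aestronglyMeasurable.enorm
    _ ≤ ENNReal.ofReal (∫ z in U, ‖m z‖) := by
        refine liminf_le_of_frequently_le' (.of_forall fun n => ?_)
        rw [← ofReal_integral_norm_eq_lintegral_enorm (key n).1]
        refine ENNReal.ofReal_le_ofReal (le_trans (le_of_eq ?_) (key n).2)
        congr 1
        ext z
        exact Real.norm_of_nonneg (mul_nonneg (hθ0 n _) (hh0 z))
    _ < ⊤ := ENNReal.ofReal_lt_top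

/-- Stokes' formula for `f · e · (conj z - S z)`: there is no boundary term, whatever the
regularity of the frontier. -/
lemma integral_eq_zero (H : CutoffSetting U C O K S e) {f : ℂ → ℂ}
    (hf : DifferentiableOn ℂ f U) {M : ℝ} (hM : ∀ z ∈ U, ‖f z‖ ≤ M) :
    ∫ z in U, f z * (e z + defect S z * dbar (fun z => (e z : ℂ)) z) = 0 := by
  obtain ⟨B, θ, θ', hB, hθcd, hθd, hθ'0, hθ'c, hθ0, hθ1, hθs, hθl, hθB⟩ := exists_cutoffs
  set g := defect S with hg
  set N : ℂ → ℝ := fun z => Complex.normSq (g z) with hN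
  set q : ℂ → ℂ := fun z => conj (g z) - g z * conj (deriv S z) with hq
  set d := dbar (fun z => (e z : ℂ)) with hd
  have hgc := H.contDiffOn_defect
  have hNc := H.contDiffOn_normSq
  have hec := H.contDiff_coe_e
  have hqc : ContDiffOn ℝ 1 q U :=
    (contDiffOn_conj hgc).sub (hgc.mul (contDiffOn_conj H.contDiffOn_deriv_S))
  have hdc : Continuous d := dbar_continuous hec
  have hfc : ContDiffOn ℝ 1 f U := (hf.contDiffOn H.isOpen_U (n := 1)).restrict_scalars ℝ
  have hgd : IntegrableOn (fun z => ‖g z * d z‖) U :=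
    integrableOn_of_continuousOn_compact H.isOpen_U H.isCompact_K
      ((hgc.continuousOn.mul hdc.continuousOn).norm.mono H.K_sub)
      (fun z hz => by simp [hd, H.dbar_zero z hz.2])
  have hone : IntegrableOn (fun _ : ℂ => (1:ℝ)) U :=
    integrableOn_const ((measure_mono H.U_sub).trans_lt H.isCompact_C.measure_lt_top).ne
  set F : ℕ → ℂ → ℂ := fun n z =>
    f z * ((θ' n (N z) * q z * g z + θ n (N z)) * e z + θ n (N z) * (g z * d z)) with hF
  have hF0 : ∀ n, ∫ z in U, F n z = 0 := by
    intro n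
    obtain ⟨hKc, hKU⟩ := H.compact_level (δ := 1 / ((n:ℝ) + 1)) (by positivity)
    set L := {z ∈ C \ O | 1 / ((n:ℝ) + 1) ≤ Complex.normSq (defect S z)} with hL
    have hθN : ContDiffOn ℝ 1 (fun z => θ n (N z)) U := (hθcd n).comp_contDiffOn hNc
    refine integral_dbar_open H.isOpen_U hKc hKU
      (W := fun z => f z * (((θ n (N z) : ℂ) * g z) * e z))
      (hfc.mul (((Complex.ofRealCLM.contDiff.comp_contDiffOn hθN).mul hgc).mul hec.contDiffOn))
      ?_ ?_
    · rintro z ⟨hzU, hzL⟩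
      by_cases hzO : z ∈ O
      · simp [H.e_zero z hzO]
      · have := (hθs n (N z) (by
          by_contra hlt
          exact hzL ⟨⟨H.U_sub hzU, hzO⟩, not_lt.1 hlt⟩)).1
        simp [this]
    · intro z hz
      obtain ⟨a1, h1⟩ := H.hasWirt_cutoff hz (hθd n (N z))
      obtain ⟨a2, h2⟩ := H.hasWirt_e z
      have h3 := H.hasWirt_defect hz
      have h0 : HasWirt f (deriv f z) 0 z :=
        .of_hasDerivAt (hf.differentiableAt (H.isOpen_U.mem_nhds hz)).hasDerivAt
      have h5 := h0.mul ((h1.mul h3).mul h2)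
      refine ⟨_, by convert h5 using 1; simp only [hF, hq, hd, hg]; ring⟩
  have hlim : Tendsto (fun n => ∫ z in U, F n z) atTop
      (𝓝 (∫ z in U, f z * (e z + g z * d z))) := by
    refine tendsto_integral_of_dominated_convergence
      (fun z => M * ((B + 1) * (1 + e z ^ 2 * (1 + ‖deriv S z‖ ^ 2)) + ‖g z * d z‖)) ?_ ?_ ?_ ?_
    · intro n
      have hθN : ContinuousOn (fun z => (θ n (N z) : ℂ)) U :=
        Complex.continuous_ofReal.comp_continuousOn
          ((hθcd n).continuous.comp_continuousOn hNc.continuousOn)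
      have hθ'N : ContinuousOn (fun z => (θ' n (N z) : ℂ)) U :=
        Complex.continuous_ofReal.comp_continuousOn
          ((hθ'c n).comp_continuousOn hNc.continuousOn)
      have := hgc.continuousOn
      have := hfc.continuousOn
      have := hqc.continuousOn
      have := hec.continuous.continuousOn (s := U)
      have hFc : ContinuousOn (F n) U := by
        simp only [hF]
        fun_prop
      exact hFc.aestronglyMeasurable H.isOpen_U.measurableSet
    · exact (((hone.add H.integrable_energy).const_mul (B + 1)).add hgd).const_mul M
    · intro n
      filter_upwards [ae_restrict_mem H.isOpen_U.measurableSet] with z hz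
      have hM0 : 0 ≤ M := (norm_nonneg _).trans (hM z hz)
      rw [hF, norm_mul]
      refine mul_le_mul (hM z hz) ?_ (norm_nonneg _) hM0
      refine (norm_add_le _ _).trans (add_le_add ?_ ?_)
      · have hq1 : ‖q z‖ ≤ ‖g z‖ * (1 + ‖deriv S z‖) := by
          refine (norm_sub_le _ _).trans (le_of_eq ?_)
          simp; ring
        have hA : ‖(θ' n (N z) : ℂ) * q z * g z‖ ≤ B * (1 + ‖deriv S z‖) := by
          rw [norm_mul, norm_mul, Complex.norm_real, Real.norm_of_nonneg (hθ'0 n _)]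
          have h1 := hθB n (N z) (Complex.normSq_nonneg _)
          have h2 : N z = ‖g z‖ ^ 2 := Complex.normSq_eq_norm_sq _
          have h3 := hθ'0 n (N z)
          calc θ' n (N z) * ‖q z‖ * ‖g z‖
              ≤ θ' n (N z) * (‖g z‖ * (1 + ‖deriv S z‖)) * ‖g z‖ := by gcongr
            _ = (N z * θ' n (N z)) * (1 + ‖deriv S z‖) := by rw [h2]; ring
            _ ≤ _ := by gcongr
        have hT : ‖(θ n (N z) : ℂ)‖ ≤ 1 := by
          rw [Complex.norm_real, Real.norm_of_nonneg (hθ0 n _)]; exact hθ1 n _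
        rw [norm_mul, Complex.norm_real, Real.norm_eq_abs]
        have hx := norm_nonneg (deriv S z)
        have hs : |e z| * (1 + ‖deriv S z‖) ≤ 1 + e z ^ 2 * (1 + ‖deriv S z‖ ^ 2) := by
          rw [← sq_abs (e z)]
          nlinarith [sq_nonneg (|e z| - 1), sq_nonneg (|e z| * ‖deriv S z‖ - 1),
            abs_nonneg (e z)]
        calc ‖(θ' n (N z) : ℂ) * q z * g z + θ n (N z)‖ * |e z|
            ≤ (B * (1 + ‖deriv S z‖) + 1) * |e z| := by
              gcongr; exact (norm_add_le _ _).trans (add_le_add hA hT)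
          _ ≤ (B + 1) * (|e z| * (1 + ‖deriv S z‖)) := by
              nlinarith [mul_nonneg (abs_nonneg (e z)) hx]
          _ ≤ _ := by gcongr
      · rw [norm_mul, Complex.norm_real, Real.norm_of_nonneg (hθ0 n _)]
        exact mul_le_of_le_one_left (norm_nonneg _) (hθ1 n _)
    · filter_upwards [H.ae_defect_ne_zero] with z hz
      refine tendsto_const_nhds.congr' ?_
      filter_upwards [hθl (N z) (Complex.normSq_pos.2 hz)] with n hn
      simp [hF, hn.1, hn.2]
  simp only [hF0] at hlim
  exact (tendsto_nhds_unique hlim tendsto_const_nhds)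

end CutoffSetting

/-! ### The contribution of a pole -/

lemma HasWirt.sum {ι : Type*} (s : Finset ι) {W : ι → ℂ → ℂ} {b : ι → ℂ} {z : ℂ}
    (h : ∀ i ∈ s, ∃ a, HasWirt (W i) a (b i) z) :
    ∃ a, HasWirt (fun w => ∑ i ∈ s, W i w) a (∑ i ∈ s, b i) z := by
  classical
  induction s using Finset.induction_on with
  | empty => exact ⟨0, .of_fderiv (hasFDerivAt_const 0 z) fun v => by simp⟩
  | insert i s hi ih =>
    obtain ⟨a1, h1⟩ := h i (by simp)
    obtain ⟨a2, h2⟩ := ih fun j hj => h j (by simp [hj])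
    exact ⟨a1 + a2, by simpa [Finset.sum_insert hi] using! h1.add h2⟩

/-- Taylor's formula with a holomorphic remainder factor. -/
lemma taylor_remainder {f : ℂ → ℂ} {p : ℂ} {ρ : ℝ} (hρ : 0 < ρ)
    (hf : DifferentiableOn ℂ f (ball p ρ)) (n : ℕ) :
    ∃ K : ℂ → ℂ, DifferentiableOn ℂ K (ball p ρ) ∧ ∀ z,
      f z = ∑ j ∈ Finset.range n, iteratedDeriv j f p / (j.factorial : ℂ) * (z - p) ^ j
        + (z - p) ^ n * K z := by
  have hnb : ball p ρ ∈ 𝓝 p := ball_mem_nhds p hρ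
  have hps := (hf.analyticAt hnb).hasFPowerSeriesAt
  have hval : ∀ k, ((Function.swap dslope p)^[k] f) p = iteratedDeriv k f p / (k.factorial : ℂ) := by
    intro k
    have h1 := hps.has_fpower_series_iterate_dslope_fslope k
    rw [← h1.coeff_zero 1]
    change (FormalMultilinearSeries.fslope^[k] _).coeff 0 = _
    rw [FormalMultilinearSeries.coeff_iterate_fslope]
    simp [FormalMultilinearSeries.coeff_ofScalars]
  refine ⟨(Function.swap dslope p)^[n] f, ?_, fun z => ?_⟩
  · induction n with
    | zero => exact hf
    | succ n ih =>
      rw [Function.iterate_succ_apply']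
      exact (Complex.differentiableOn_dslope hnb).2 ih
  · induction n with
    | zero => simp
    | succ n ih =>
      have h2 := sub_smul_dslope ((Function.swap dslope p)^[n] f) p z
      rw [hval n, smul_eq_mul] at h2
      rw [ih, Finset.sum_range_succ, Function.iterate_succ_apply', Function.swap]
      linear_combination -(z - p) ^ n * h2

/-- The contribution of a single pole `p` of `S`: integrating `f S` against `∂̄b`, where `b` is a
cutoff function of the point `p`, only sees finitely many Taylor coefficients of `f` at `p`. -/
lemma integral_pole {S f b : ℂ → ℂ} {p L : ℂ} {r : ℝ} (hr : 0 < r) {n : ℕ}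
    (hS : DifferentiableOn ℂ S (ball p (2 * r) \ {p}))
    (hL : Tendsto (fun z => (z - p) ^ n * S z) (𝓝[≠] p) (𝓝 L))
    (hb : ContDiff ℝ 1 b) (hb0 : ∀ z ∉ closedBall p r, b z = 0)
    (hb1 : ∀ z ∈ ball p (r / 2), dbar b z = 0)
    (hb2 : ∀ z ∉ closedBall p r, dbar b z = 0)
    (hf : DifferentiableOn ℂ f (ball p (2 * r))) :
    ∫ z, f z * S z * dbar b z = ∑ j ∈ Finset.range n,
      iteratedDeriv j f p / (j.factorial : ℂ) * ∫ z, (z - p) ^ j * S z * dbar b z := by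
  set A := closedBall p r \ ball p (r / 2) with hA
  have hr2 : 0 < r / 2 := by positivity
  have hcb : closedBall p r ⊆ ball p (2 * r) := closedBall_subset_ball (by linarith)
  have hAc : IsCompact A := (isCompact_closedBall p r).diff isOpen_ball
  have hAs : A ⊆ ball p (2 * r) \ {p} := fun z hz =>
    ⟨hcb hz.1, fun h => hz.2 (by rw [h]; exact mem_ball_self hr2)⟩
  have hd0 : ∀ z ∉ A, dbar b z = 0 := fun z hz => by
    by_cases h : z ∈ ball p (r / 2)
    · exact hb1 z h
    · exact hb2 z fun h' => hz ⟨h', h⟩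
  have hint : ∀ {k : ℂ → ℂ}, ContinuousOn k (ball p (2 * r)) →
      Integrable fun z => k z * S z * dbar b z := fun {k} hk =>
    integrable_of_continuousOn_compact hAc
      (((hk.mono (hAs.trans Set.sdiff_subset)).mul (hS.continuousOn.mono hAs)).mul
        (dbar_continuous hb).continuousOn) (fun z hz => by simp [hd0 z hz])
  obtain ⟨K, hK, hT⟩ := taylor_remainder (by positivity) hf n
  -- the singularity of `(z - p) ^ n * S z` is removable
  set H : ℂ → ℂ := Function.update (fun z => (z - p) ^ n * S z) p L with hH
  have hHd : DifferentiableOn ℂ H (ball p (2 * r)) := by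
    refine (Complex.differentiableOn_compl_singleton_and_continuousAt_iff
      (ball_mem_nhds p (by positivity : 0 < 2 * r))).1 ⟨?_, continuousAt_update_same.2 hL⟩
    refine ((by fun_prop : DifferentiableOn ℂ (fun z : ℂ => (z - p) ^ n) _).mul hS).congr ?_
    intro z hz
    exact Function.update_of_ne hz.2 _ _
  have hrem : ∫ z, (z - p) ^ n * K z * S z * dbar b z = 0 := by
    rw [← setIntegral_eq_integral_of_forall_compl_eq_zero (s := ball p (2 * r))
      (fun z hz => by rw [hb2 z fun h => hz (hcb h), mul_zero])]
    have h0 := integral_dbar_open isOpen_ball (isCompact_closedBall p r) hcb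
      (W := fun z => K z * H z * b z) (b := fun z => K z * H z * dbar b z)
      (((((hK.mul hHd).contDiffOn isOpen_ball (n := 1)).restrict_scalars ℝ)).mul hb.contDiffOn)
      (fun z hz => by simp [hb0 z hz.2])
      (fun z hz => by
        have h1 : HasWirt (fun z => K z * H z) (deriv (fun z => K z * H z) z) 0 z :=
          .of_hasDerivAt ((hK.mul hHd).differentiableAt (isOpen_ball.mem_nhds hz)).hasDerivAt
        have h2 := HasWirt.of_differentiableAt (hb.differentiable one_ne_zero z)
        exact ⟨_, by simpa using! h1.mul h2⟩)
    rw [← h0]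
    refine setIntegral_congr_fun isOpen_ball.measurableSet fun z hz => ?_
    rcases eq_or_ne z p with rfl | hzp
    · simp [hb1 z (mem_ball_self hr2)]
    · simp only [hH, Function.update_of_ne hzp]
      ring
  calc ∫ z, f z * S z * dbar b z
      = ∫ z, ((∑ j ∈ Finset.range n, iteratedDeriv j f p / (j.factorial : ℂ) *
          ((z - p) ^ j * S z * dbar b z)) + (z - p) ^ n * K z * S z * dbar b z) := by
        congr 1
        ext z
        rw [hT z, add_mul, add_mul, Finset.sum_mul, Finset.sum_mul]
        congr 1
        exact Finset.sum_congr rfl fun j _ => by ring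
    _ = _ := by
        have hi : ∀ j : ℕ, Integrable fun z => iteratedDeriv j f p / (j.factorial : ℂ) *
            ((z - p) ^ j * S z * dbar b z) := fun j =>
          (hint (k := fun z => (z - p) ^ j) (by fun_prop)).const_mul _
        rw [integral_add (integrable_finsetSum _ fun j _ => hi j)
          (hint (k := fun z => (z - p) ^ n * K z)
            ((by fun_prop : ContinuousOn (fun z : ℂ => (z - p) ^ n) _).mul hK.continuousOn)),
          hrem, add_zero, integral_finsetSum _ fun j _ => hi j]
        exact Finset.sum_congr rfl fun j _ => integral_const_mul _ _

/-! ### The quadrature identity of a Schwarz function -/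

/-- Small radii separating a finite set of points from each other and from the complement of an
open set. -/
lemma exists_radius {Ω : Set ℂ} (hΩ : IsOpen Ω) (P : Finset ℂ) (hP : ∀ p ∈ P, p ∈ Ω) :
    ∃ r : ℝ, 0 < r ∧ (∀ p ∈ P, closedBall p (2 * r) ⊆ Ω) ∧
      ∀ p ∈ P, ∀ q ∈ P, p ≠ q → 4 * r < dist p q := by
  have h1 : ∀ᶠ r : ℝ in 𝓝[>] 0, ∀ p ∈ P, closedBall p (2 * r) ⊆ Ω := by
    refine (Finset.eventually_all P).2 fun p hp => ?_
    obtain ⟨ε, hε, h⟩ := nhds_basis_closedBall.mem_iff.1 (hΩ.mem_nhds (hP p hp))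
    filter_upwards [Ioo_mem_nhdsGT (show (0:ℝ) < ε / 2 by positivity)] with r hr
    exact (closedBall_subset_closedBall (by linarith [hr.2])).trans h
  have h2 : ∀ᶠ r : ℝ in 𝓝[>] 0, ∀ p ∈ P, ∀ q ∈ P, p ≠ q → 4 * r < dist p q := by
    refine (Finset.eventually_all P).2 fun p _ => (Finset.eventually_all P).2 fun q _ => ?_
    by_cases hpq : p = q
    · simp [hpq]
    have := dist_pos.2 hpq
    filter_upwards [Ioo_mem_nhdsGT (show (0:ℝ) < dist p q / 4 by positivity)] with r hr _
    linarith [hr.2]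
  obtain ⟨r, h1, h2, h3⟩ := (h1.and (h2.and self_mem_nhdsWithin)).exists
  exact ⟨r, h3, h1, h2⟩

/-- A Schwarz function yields a quadrature identity, whose nodes are the poles and whose
coefficients are integrals of `(z - p) ^ j * S z` against `∂̄` of a bump function at the pole `p`,
which play the role of residues. -/
theorem isBoundedQD_of_hasSchwarzFunction {Ω : Set ℂ} (hne : Ω.Nonempty) (hbdd : IsBounded Ω)
    (hopen : IsOpen Ω) (hΩ : HasSchwarzFunction Ω) : IsBoundedQD Ω := by
  classical
  obtain ⟨S, P₀, hP₀, hSd₀, hpole₀, hSc₀, hfr⟩ := hΩ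
  obtain ⟨a₀, ha₀⟩ := hne
  -- Adding a point to `P₀` makes sure that there is at least one node.
  obtain ⟨P, hPP, hP, hPne, hpole⟩ : ∃ P : Finset ℂ, P₀ ⊆ P ∧ (∀ p ∈ P, p ∈ Ω) ∧ P.Nonempty ∧
      ∀ p ∈ P, ∃ n : ℕ, ∃ L : ℂ, Tendsto (fun z => (z - p) ^ n * S z) (𝓝[≠] p) (𝓝 L) := by
    by_cases h : P₀.Nonempty
    · exact ⟨P₀, subset_rfl, fun p hp => hP₀ hp, h, hpole₀⟩
    · rw [Finset.not_nonempty_iff_eq_empty] at h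
      subst h
      refine ⟨{a₀}, by simp, by simpa using ha₀, by simp, fun p hp => ⟨0, S p, ?_⟩⟩
      obtain rfl : p = a₀ := by simpa using hp
      have h1 : DifferentiableAt ℂ S p := hSd₀.differentiableAt (by simpa using hopen.mem_nhds ha₀)
      simpa using h1.continuousAt.tendsto.mono_left nhdsWithin_le_nhds
  have hPP' : (↑P₀ : Set ℂ) ⊆ ↑P := hPP
  have hSd : DifferentiableOn ℂ S (Ω \ ↑P) := hSd₀.mono (Set.sdiff_subset_sdiff_right hPP')
  have hSc : ContinuousOn S (closure Ω \ ↑P) := hSc₀.mono (Set.sdiff_subset_sdiff_right hPP')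
  obtain ⟨r, hr, hrΩ, hrd⟩ := exists_radius hopen P hP
  have hr2 : 0 < r / 2 := by positivity
  have hrΩ' : ∀ p ∈ P, closedBall p r ⊆ Ω := fun p hp =>
    (closedBall_subset_closedBall (by linarith)).trans (hrΩ p hp)
  set β : (p : ℂ) → ContDiffBump p := fun p => ⟨r / 2, r, hr2, by linarith⟩ with hβ
  set b : ℂ → ℂ → ℂ := fun p z => (β p z : ℂ) with hb
  set A : ℂ → Set ℂ := fun p => closedBall p r \ ball p (r / 2) with hA
  have hbc : ∀ p, ContDiff ℝ 1 (b p) := fun p =>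
    Complex.ofRealCLM.contDiff.comp (β p).contDiff
  have hb0' : ∀ p, ∀ z ∉ closedBall p r, β p z = 0 := fun p z hz =>
    (β p).zero_of_le_dist (not_le.1 hz).le
  have hb0 : ∀ p, ∀ z ∉ closedBall p r, b p z = 0 := fun p z hz => by simp [hb, hb0' p z hz]
  have hb1 : ∀ p, ∀ z ∈ ball p (r / 2), dbar (b p) z = 0 := fun p z hz => by
    refine dbar_of_eventually_const (c := 1) ?_
    filter_upwards [isOpen_ball.mem_nhds hz] with w hw
    simp only [hb]
    rw [(β p).one_of_mem_closedBall (ball_subset_closedBall hw), Complex.ofReal_one]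
  have hb2 : ∀ p, ∀ z ∉ closedBall p r, dbar (b p) z = 0 := fun p z hz => by
    refine dbar_of_eventually_const (c := 0) ?_
    filter_upwards [isClosed_closedBall.isOpen_compl.mem_nhds hz] with w hw using hb0 p w hw
  have hbA : ∀ p, ∀ z ∉ A p, dbar (b p) z = 0 := fun p z hz => by
    by_cases h : z ∈ ball p (r / 2)
    · exact hb1 p z h
    · exact hb2 p z fun h' => hz ⟨h', h⟩
  have hAc : ∀ p, IsCompact (A p) := fun p => (isCompact_closedBall p r).diff isOpen_ball
  have hsep : ∀ p ∈ P, ∀ q ∈ P, q ≠ p → ∀ z ∈ ball q (r / 2), z ∉ closedBall p r := by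
    intro p hp q hq hqp z hz hz'
    have h1 := hrd q hq p hp hqp
    have h2 := dist_triangle_left q p z
    rw [mem_ball] at hz
    rw [mem_closedBall] at hz'
    linarith
  have hAU : ∀ p ∈ P, A p ⊆ Ω \ ↑P := by
    rintro p hp z ⟨hz1, hz2⟩
    refine ⟨hrΩ' p hp hz1, fun hzP => ?_⟩
    by_cases h : z = p
    · exact hz2 (h ▸ mem_ball_self hr2)
    · exact hsep p hp z hzP h z (mem_ball_self hr2) hz1
  set e : ℂ → ℝ := fun z => 1 - ∑ p ∈ P, β p z with he
  have hec : ContDiff ℝ 1 e := contDiff_const.sub (ContDiff.sum fun p _ => (β p).contDiff)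
  have hdbar : ∀ z, dbar (fun z => (e z : ℂ)) z = -∑ p ∈ P, dbar (b p) z := by
    intro z
    obtain ⟨a, h1⟩ := HasWirt.sum P (W := b) (b := fun p => dbar (b p) z) (z := z) fun p _ =>
      ⟨_, .of_differentiableAt ((hbc p).differentiable one_ne_zero z)⟩
    have h2 : HasWirt (fun _ => (1:ℂ)) 0 0 z :=
      .of_fderiv (hasFDerivAt_const 1 z) fun v => by simp
    have h3 := (h2.sub h1).dbar_eq
    rw [zero_sub] at h3
    rw [← h3]
    congr 1
    ext w
    simp [he, hb]
  have H : CutoffSetting (Ω \ ↑P) (closure Ω) (⋃ p ∈ P, ball p (r / 2)) (⋃ p ∈ P, A p) S e :=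
    { isOpen_U := hopen.sdiff P.finite_toSet.isClosed
      isCompact_C := hbdd.isCompact_closure
      isOpen_O := isOpen_biUnion fun _ _ => isOpen_ball
      isCompact_K := P.isCompact_biUnion fun p _ => hAc p
      U_sub := Set.sdiff_subset.trans subset_closure
      K_sub := Set.iUnion₂_subset hAU
      diff_S := hSd
      cont_S := hSc.mono (Set.sdiff_subset_sdiff_right fun p hp =>
        Set.mem_biUnion (show p ∈ P from hp) (mem_ball_self hr2))
      eq_conj := by
        rintro z ⟨hz1, hz2⟩ hz3
        have hzP : z ∉ (↑P : Set ℂ) := fun h =>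
          hz2 (Set.mem_biUnion (show z ∈ P from h) (mem_ball_self hr2))
        refine hfr z ?_
        rw [hopen.frontier_eq]
        exact ⟨hz1, fun h => hz3 ⟨h, hzP⟩⟩
      contDiff_e := hec
      e_zero := by
        intro z hz
        obtain ⟨q, hq, hzq⟩ := Set.mem_iUnion₂.1 hz
        have h1 : ∑ p ∈ P, β p z = β q z :=
          Finset.sum_eq_single_of_mem q hq fun p hp hpq =>
            hb0' p z (hsep p hp q hq hpq.symm z hzq)
        simp only [he]
        rw [h1, (β q).one_of_mem_closedBall (ball_subset_closedBall hzq), sub_self]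
      dbar_zero := by
        intro z hz
        rw [hdbar, Finset.sum_eq_zero, neg_zero]
        exact fun p hp => hbA p z fun h => hz (Set.mem_biUnion (show p ∈ P from hp) h) }
  have hU : volume.restrict (Ω \ ↑P) = volume.restrict Ω :=
    Measure.restrict_congr_set (sdiff_null_ae_eq_self (P.finite_toSet.measure_zero volume))
  -- The quadrature identity, with the singular contributions still written as integrals.
  have main : ∀ f : ℂ → ℂ, MemA Ω f →
      ∫ z in Ω, f z = -∑ p ∈ P, ∫ z, f z * S z * dbar (b p) z := by
    rintro f ⟨hfc, hfd'⟩
    have hfd : DifferentiableOn ℂ f Ω := fun z hz => (hfd' z hz).differentiableWithinAt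
    obtain ⟨M, hM⟩ := hbdd.isCompact_closure.exists_bound_of_continuousOn hfc
    have h0 := H.integral_eq_zero (hfd.mono Set.sdiff_subset) (M := M)
      fun z hz => hM z (subset_closure hz.1)
    set G : ℂ → ℂ := fun z => f z * ((∑ p ∈ P, b p z) + conj z * ∑ p ∈ P, dbar (b p) z) with hG
    set Q := ⋃ p ∈ P, closedBall p r with hQ
    have hQc : IsCompact Q := P.isCompact_biUnion fun p _ => isCompact_closedBall p r
    have hQΩ : Q ⊆ Ω := Set.iUnion₂_subset hrΩ'
    have hQ0 : ∀ z ∉ Q, ∀ p ∈ P, z ∉ closedBall p r := fun z hz p hp h =>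
      hz (Set.mem_biUnion (show p ∈ P from hp) h)
    have hbs : ContDiff ℝ 1 fun z => ∑ p ∈ P, b p z := ContDiff.sum fun p _ => hbc p
    have hds : Continuous fun z => ∑ p ∈ P, dbar (b p) z :=
      continuous_finsetSum _ fun p _ => dbar_continuous (hbc p)
    have hGi : IntegrableOn G Ω :=
      integrableOn_of_continuousOn_compact hopen hQc
        ((hfd.continuousOn.mono hQΩ).mul
          (hbs.continuous.add (Complex.continuous_conj.mul hds)).continuousOn)
        (fun z hz => by
          have h1 := hQ0 z hz.2
          simp only [hG]
          rw [Finset.sum_eq_zero fun p hp => hb0 p z (h1 p hp),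
            Finset.sum_eq_zero fun p hp => hb2 p z (h1 p hp)]
          simp)
    have hG0 : ∫ z in Ω, G z = 0 := by
      refine integral_dbar_open hopen hQc hQΩ (W := fun z => f z * (conj z * ∑ p ∈ P, b p z))
        (((hfd.contDiffOn hopen (n := 1)).restrict_scalars ℝ).mul
          ((Complex.conjCLE.contDiff.mul hbs).contDiffOn)) ?_ ?_
      · intro z hz
        rw [Finset.sum_eq_zero fun p hp => hb0 p z (hQ0 z hz.2 p hp)]
        simp
      · intro z hz
        obtain ⟨a, h1⟩ := HasWirt.sum P (W := b) (b := fun p => dbar (b p) z) (z := z) fun p _ =>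
          ⟨_, .of_differentiableAt ((hbc p).differentiable one_ne_zero z)⟩
        have h2 := (HasWirt.of_hasDerivAt (hfd' z hz).hasDerivAt).mul ((HasWirt.conj_id z).mul h1)
        exact ⟨_, by simpa [hG] using! h2⟩
    have hfi : IntegrableOn f Ω :=
      (hfc.integrableOn_compact hbdd.isCompact_closure).mono_set subset_closure
    have hSi : ∀ p ∈ P, Integrable fun z => f z * S z * dbar (b p) z := fun p hp =>
      integrable_of_continuousOn_compact (hAc p)
        ((((hfd.continuousOn.mono Set.sdiff_subset).mul hSd.continuousOn).mono (hAU p hp)).mul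
          (dbar_continuous (hbc p)).continuousOn) (fun z hz => by simp [hbA p z hz])
    have hS0 : ∀ p ∈ P, ∫ z in Ω, f z * S z * dbar (b p) z = ∫ z, f z * S z * dbar (b p) z :=
      fun p hp => setIntegral_eq_integral_of_forall_compl_eq_zero fun z hz => by
        rw [hbA p z fun h => hz (hAU p hp h).1, mul_zero]
    have h1 : ∀ z, f z * (e z + defect S z * dbar (fun z => (e z : ℂ)) z) =
        f z - G z + ∑ p ∈ P, f z * S z * dbar (b p) z := by
      intro z
      rw [hdbar, ← Finset.mul_sum]
      simp only [he, hG, hb, defect, Complex.ofReal_sub, Complex.ofReal_sum, Complex.ofReal_one]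
      ring
    simp only [h1] at h0
    have hfG : IntegrableOn (fun z => f z - G z) Ω := hfi.sub hGi
    rw [hU, integral_add hfG (integrable_finsetSum _ fun p hp => (hSi p hp).restrict),
      integral_sub hfi hGi, hG0, sub_zero,
      integral_finsetSum _ fun p hp => (hSi p hp).restrict, Finset.sum_congr rfl hS0] at h0
    exact eq_neg_of_add_eq_zero_left h0
  choose! N L hNL using hpole
  have pole : ∀ f : ℂ → ℂ, MemA Ω f → ∀ p ∈ P, -∫ z, f z * S z * dbar (b p) z =
      ∑ j : Fin (N p + 1), -((∫ z, (z - p) ^ (j : ℕ) * S z * dbar (b p) z) /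
        ((j : ℕ).factorial : ℂ)) * iteratedDeriv (j : ℕ) f p := by
    intro f hf p hp
    have hball : ball p (2 * r) ⊆ Ω := ball_subset_closedBall.trans (hrΩ p hp)
    have hlim : Tendsto (fun z => (z - p) ^ (N p + 1) * S z) (𝓝[≠] p) (𝓝 (0 * L p)) := by
      have h1 : Tendsto (fun z => z - p) (𝓝[≠] p) (𝓝 0) := by
        have : Tendsto (fun z => z - p) (𝓝 p) (𝓝 (p - p)) := by
          exact (continuous_id.sub continuous_const).tendsto p
        rw [sub_self] at this
        exact this.mono_left nhdsWithin_le_nhds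
      refine (h1.mul (hNL p hp)).congr fun z => by ring
    have hSp : DifferentiableOn ℂ S (ball p (2 * r) \ {p}) := by
      refine hSd.mono fun z hz => ⟨hball hz.1, fun hzP => ?_⟩
      have h1 := hrd z hzP p hp hz.2
      have h2 := hz.1
      rw [mem_ball] at h2
      linarith
    rw [integral_pole hr hSp hlim (hbc p) (hb0 p) (hb1 p) (hb2 p)
      (fun z hz => (hf.2 z (hball hz)).differentiableWithinAt),
      ← Fin.sum_univ_eq_sum_range (fun j => iteratedDeriv j f p / (j.factorial : ℂ) *
        ∫ z, (z - p) ^ j * S z * dbar (b p) z), ← Finset.sum_neg_distrib]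
    exact Finset.sum_congr rfl fun j _ => by ring
  refine ⟨P.card, hPne.card_pos, fun k => (P.equivFin.symm k : ℂ),
    fun k => hP _ (P.equivFin.symm k).2, fun k => N (P.equivFin.symm k : ℂ),
    fun k j => -((∫ z, (z - (P.equivFin.symm k : ℂ)) ^ (j : ℕ) * S z *
      dbar (b (P.equivFin.symm k : ℂ)) z) / ((j : ℕ).factorial : ℂ)), fun f hf => ?_⟩
  rw [main f hf, ← Finset.sum_neg_distrib, ← Finset.sum_coe_sort,
    ← P.equivFin.symm.sum_comp]
  exact Finset.sum_congr rfl fun k _ => pole f hf _ (P.equivFin.symm k).2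

/-! ### The regularized Cauchy kernel -/

/-- The Cauchy kernel `1 / w`, regularized at the origin. -/
def cauchyKer (t : ℝ) (w : ℂ) : ℂ := conj w / (Complex.normSq w + t : ℝ)

lemma normSq_add_pos {t : ℝ} (ht : 0 < t) (w : ℂ) : 0 < Complex.normSq w + t :=
  add_pos_of_nonneg_of_pos (Complex.normSq_nonneg w) ht

lemma contDiff_cauchyKer {t : ℝ} (ht : 0 < t) : ContDiff ℝ 1 (cauchyKer t) := by
  have h1 : ContDiff ℝ 1 (fun w : ℂ => Complex.normSq w + t) := by
    have : ContDiff ℝ 1 (fun w : ℂ => w.re * w.re + w.im * w.im + t) :=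
      ((Complex.reCLM.contDiff.mul Complex.reCLM.contDiff).add
        (Complex.imCLM.contDiff.mul Complex.imCLM.contDiff)).add contDiff_const
    exact this
  have h2 : ContDiff ℝ 1 (fun w : ℂ => ((Complex.normSq w + t : ℝ) : ℂ)) :=
    Complex.ofRealCLM.contDiff.comp h1
  exact Complex.conjCLE.contDiff.mul
    (h2.inv fun w => Complex.ofReal_ne_zero.2 (normSq_add_pos ht w).ne')

lemma dbar_cauchyKer {t : ℝ} (ht : 0 < t) (w : ℂ) :
    dbar (cauchyKer t) w = ((t / (Complex.normSq w + t) ^ 2 : ℝ) : ℂ) := by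
  have hid : HasWirt (fun w => w) 1 0 w := .of_hasDerivAt (hasDerivAt_id w)
  have h1 := hid.mul hid.star
  rw [funext fun w => Complex.mul_conj w] at h1
  have hp := normSq_add_pos ht w
  have h2 : HasDerivAt (fun x : ℝ => (x + t)⁻¹) (-1 / (Complex.normSq w + t) ^ 2)
      (Complex.normSq w) := ((hasDerivAt_id _).add_const t).fun_inv hp.ne'
  have h3 := hid.star.mul (h1.real_comp h2)
  have h4 : cauchyKer t = fun w => conj w * (((Complex.normSq w + t)⁻¹ : ℝ) : ℂ) := by
    ext w
    rw [cauchyKer, div_eq_mul_inv, Complex.ofReal_inv]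
  rw [h4, h3.dbar_eq]
  have h5 : ((Complex.normSq w + t : ℝ) : ℂ) ≠ 0 := Complex.ofReal_ne_zero.2 hp.ne'
  have h6 : (Complex.normSq w : ℂ) = w * conj w := (Complex.mul_conj w).symm
  push_cast at h5 ⊢
  field_simp
  simp only [map_one]
  rw [h6]
  ring

lemma inv_eq_cauchyKer (w : ℂ) : w⁻¹ = conj w / (Complex.normSq w : ℂ) := by
  rw [Complex.inv_def, Complex.ofReal_inv, div_eq_mul_inv]

lemma norm_cauchyKer_sub {t : ℝ} (ht : 0 < t) (w : ℂ) :
    ‖w⁻¹ - cauchyKer t w‖ = t * (‖w‖ * (‖w‖ ^ 2 + t))⁻¹ := by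
  rcases eq_or_ne w 0 with rfl | hw
  · simp [cauchyKer]
  have hp := normSq_add_pos ht w
  have hw' : 0 < ‖w‖ := norm_pos_iff.2 hw
  have h1 : w⁻¹ - cauchyKer t w = w⁻¹ * ((t / (Complex.normSq w + t) : ℝ) : ℂ) := by
    rw [cauchyKer, inv_eq_cauchyKer]
    have h5 : ((Complex.normSq w + t : ℝ) : ℂ) ≠ 0 := Complex.ofReal_ne_zero.2 hp.ne'
    have h6 : ((Complex.normSq w : ℝ) : ℂ) ≠ 0 :=
      Complex.ofReal_ne_zero.2 (Complex.normSq_pos.2 hw).ne'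
    push_cast at h5 ⊢
    field_simp
    ring
  rw [h1, norm_mul, norm_inv, Complex.norm_real, Real.norm_of_nonneg (by positivity),
    Complex.normSq_eq_norm_sq]
  field_simp

lemma norm_cauchyKer_le {t : ℝ} (ht : 0 < t) (w : ℂ) : ‖cauchyKer t w‖ ≤ ‖w⁻¹‖ := by
  rcases eq_or_ne w 0 with rfl | hw
  · simp [cauchyKer]
  have hw' : 0 < ‖w‖ := norm_pos_iff.2 hw
  have hp := normSq_add_pos ht w
  rw [cauchyKer, norm_div, Complex.norm_real, Real.norm_of_nonneg hp.le, norm_inv, RCLike.norm_conj,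
    Complex.normSq_eq_norm_sq, div_le_iff₀ (by positivity)]
  field_simp
  linarith

lemma norm_cauchyKer_le_const {t : ℝ} (ht : 0 < t) (w : ℂ) : ‖cauchyKer t w‖ ≤ 1 + t⁻¹ := by
  have hp := normSq_add_pos ht w
  rw [cauchyKer, norm_div, Complex.norm_real, Real.norm_of_nonneg hp.le, RCLike.norm_conj,
    Complex.normSq_eq_norm_sq, div_le_iff₀ (by positivity)]
  have h1 : t⁻¹ * t = 1 := inv_mul_cancel₀ ht.ne'
  have h2 : 0 < t⁻¹ := inv_pos.2 ht
  nlinarith [sq_nonneg (‖w‖ - 1), mul_nonneg h2.le (sq_nonneg ‖w‖), norm_nonneg w]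

lemma integrable_tail : Integrable fun w : ℂ => (‖w‖ * (‖w‖ ^ 2 + 1))⁻¹ := by
  rw [integrable_fun_norm_addHaar volume (f := fun y : ℝ => (y * (y ^ 2 + 1))⁻¹)]
  refine (integrable_inv_one_add_sq.integrableOn (s := Set.Ioi 0)).congr_fun ?_ measurableSet_Ioi
  intro y hy
  have : (0:ℝ) < y := hy
  simp [Complex.finrank_real_complex]
  field_simp
  ring

lemma tail_le (n : ℕ) (w : ℂ) :
    ‖1 / ((n:ℝ) + 1) * (‖w‖ * (‖w‖ ^ 2 + 1 / ((n:ℝ) + 1)))⁻¹‖ ≤ (‖w‖ * (‖w‖ ^ 2 + 1))⁻¹ := by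
  rw [Real.norm_of_nonneg (by positivity)]
  rcases eq_or_ne w 0 with rfl | hw
  · simp
  have hw' : 0 < ‖w‖ := norm_pos_iff.2 hw
  have h1 : 1 / ((n:ℝ) + 1) ≤ 1 := by
    rw [div_le_one (by positivity)]; linarith [(n.cast_nonneg : (0:ℝ) ≤ n)]
  have h2 : 0 < 1 / ((n:ℝ) + 1) := by positivity
  generalize 1 / ((n:ℝ) + 1) = t at h1 h2
  rw [← div_eq_mul_inv, div_le_iff₀ (by positivity), inv_mul_eq_div, le_div_iff₀ (by positivity)]
  nlinarith [mul_nonneg hw'.le (mul_nonneg (sq_nonneg ‖w‖) (sub_nonneg.2 h1))]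

lemma tendsto_tail :
    Tendsto (fun n : ℕ => ∫ w : ℂ, 1 / ((n:ℝ) + 1) * (‖w‖ * (‖w‖ ^ 2 + 1 / ((n:ℝ) + 1)))⁻¹) atTop
      (𝓝 0) := by
  have h0 : Tendsto (fun n : ℕ => 1 / ((n:ℝ) + 1)) atTop (𝓝 0) :=
    tendsto_one_div_add_atTop_nhds_zero_nat
  rw [← integral_zero ℂ ℝ]
  refine tendsto_integral_of_dominated_convergence _ (fun n => ?_) integrable_tail (fun n => ?_) ?_
  · exact (by fun_prop : Measurable _).aestronglyMeasurable
  · exact .of_forall fun w => tail_le n w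
  · filter_upwards [Measure.ae_ne volume (0:ℂ)] with w hw
    have hw' : 0 < ‖w‖ := norm_pos_iff.2 hw
    have h1 : Tendsto (fun n : ℕ => (‖w‖ * (‖w‖ ^ 2 + 1 / ((n:ℝ) + 1)))⁻¹) atTop
        (𝓝 (‖w‖ * (‖w‖ ^ 2 + 0))⁻¹) :=
      ((h0.const_add _).const_mul _).inv₀ (by positivity)
    simpa using h0.mul h1

/-! ### The Cauchy–Pompeiu formula -/

/-- A bounded, compactly supported density has integrable Cauchy potential. -/
lemma integrable_mul_inv_sub {h : ℂ → ℂ} (hm : AEStronglyMeasurable h) {M R : ℝ}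
    (hM : ∀ w, ‖h w‖ ≤ M) (hR : ∀ w ∉ closedBall 0 R, h w = 0) (z : ℂ) :
    Integrable fun w => h w * (w - z)⁻¹ := by
  have h1 : Integrable fun w : ℂ => (‖w - z‖ * (‖w - z‖ ^ 2 + 1))⁻¹ :=
    integrable_tail.comp_sub_right z
  refine (h1.const_mul (M * ((|R| + ‖z‖) ^ 2 + 1))).mono'
    (hm.mul (by fun_prop : Measurable fun w : ℂ => (w - z)⁻¹).aestronglyMeasurable) ?_
  refine .of_forall fun w => ?_
  have hM0 : 0 ≤ M := (norm_nonneg _).trans (hM w)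
  by_cases hw : w ∈ closedBall (0:ℂ) R
  · rcases eq_or_ne w z with rfl | hwz
    · simp
    have hp : 0 < ‖w - z‖ := norm_pos_iff.2 (sub_ne_zero.2 hwz)
    have hle : ‖w - z‖ ≤ |R| + ‖z‖ := by
      refine (norm_sub_le _ _).trans ?_
      gcongr
      exact (mem_closedBall_zero_iff.1 hw).trans (le_abs_self R)
    rw [norm_mul, norm_inv, mul_assoc]
    refine mul_le_mul (hM w) ?_ (by positivity) hM0
    rw [← div_eq_mul_inv, le_div_iff₀ (by positivity), inv_mul_cancel_left₀ hp.ne']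
    gcongr
  · rw [hR w hw, zero_mul, norm_zero]
    positivity

lemma integrable_normSq_kernel : Integrable fun v : ℂ => 1 / (Complex.normSq v + 1) ^ 2 := by
  have h := integrable_rpow_neg_one_add_norm_sq (E := ℂ) (μ := volume) (r := 4)
    (by rw [Complex.finrank_real_complex]; norm_num)
  refine h.congr (.of_forall fun v => ?_)
  have h1 : (0:ℝ) ≤ 1 + ‖v‖ ^ 2 := by positivity
  simp only
  rw [show (-4 / 2 : ℝ) = -((2:ℕ) : ℝ) by norm_num, Real.rpow_neg h1, Real.rpow_natCast,
    Complex.normSq_eq_norm_sq, one_div, add_comm]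

/-- The constant in the Cauchy–Pompeiu formula (its value is `π`, but only its positivity
matters). -/
def pompeiuConst : ℝ := ∫ v : ℂ, 1 / (Complex.normSq v + 1) ^ 2

lemma pompeiuConst_pos : 0 < pompeiuConst := by
  have hp : ∀ v : ℂ, 0 < 1 / (Complex.normSq v + 1) ^ 2 := fun v => by
    have := normSq_add_pos one_pos v
    positivity
  refine (integral_pos_iff_support_of_nonneg (fun v => (hp v).le) integrable_normSq_kernel).2 ?_
  rw [Set.eq_univ_of_forall (s := Function.support _) fun v => (hp v).ne']
  exact Measure.measure_univ_pos.2 (NeZero.ne _)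

/-- The Cauchy–Pompeiu formula for compactly supported functions. -/
lemma cauchy_pompeiu {φ : ℂ → ℂ} (hφ : ContDiff ℝ 1 φ) (hs : HasCompactSupport φ) (z : ℂ) :
    ∫ w, dbar φ w * (w - z)⁻¹ = -(pompeiuConst * φ z) := by
  obtain ⟨M₁, hM₁⟩ := hs.exists_bound_of_continuous hφ.continuous
  have hdc := dbar_continuous hφ
  have hds : HasCompactSupport (dbar φ) :=
    hs.mono' fun w hw => by
      by_contra hw'
      refine hw (dbar_of_eventually_const (c := 0) ?_)
      exact notMem_tsupport_iff_eventuallyEq.1 hw'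
  obtain ⟨M, hM⟩ := hds.exists_bound_of_continuous hdc
  obtain ⟨R, hR⟩ := hds.isCompact.isBounded.subset_closedBall 0
  have hint := integrable_mul_inv_sub hdc.aestronglyMeasurable hM
    (fun w hw => image_eq_zero_of_notMem_tsupport fun h => hw (hR h)) z
  set s : ℕ → ℝ := fun n => 1 / ((n:ℝ) + 1) with hsdef
  have hs0 : ∀ n, 0 < s n := fun n => by positivity
  have hslim : Tendsto s atTop (𝓝 0) := tendsto_one_div_add_atTop_nhds_zero_nat
  -- Stokes' formula for the regularized kernel, followed by a rescaling around `z`.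
  have hstokes : ∀ n, ∫ w, dbar φ w * cauchyKer (s n ^ 2) (w - z) =
      -∫ v, φ (z + s n • v) * ((1 / (Complex.normSq v + 1) ^ 2 : ℝ) : ℂ) := by
    intro n
    have ht : 0 < s n ^ 2 := by have := hs0 n; positivity
    set k : ℂ → ℂ := fun w => cauchyKer (s n ^ 2) (w - z) with hk
    have hkc : ContDiff ℝ 1 k := (contDiff_cauchyKer ht).comp (contDiff_id.sub contDiff_const)
    have hkd : ∀ w, dbar k w = ((s n ^ 2 / (Complex.normSq (w - z) + s n ^ 2) ^ 2 : ℝ) : ℂ) := by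
      intro w
      rw [← dbar_cauchyKer ht, dbar, dbar, hk, fderiv_comp_sub]
    have hd : ∀ w, dbar (fun w => φ w * k w) w = dbar φ w * k w + φ w * dbar k w := fun w =>
      ((HasWirt.of_differentiableAt (hφ.differentiable one_ne_zero w)).mul
        (.of_differentiableAt (hkc.differentiable one_ne_zero w))).dbar_eq
    have h0 := integral_dbar_eq_zero (hφ.mul hkc) hs.mul_right
    simp only [hd] at h0
    have hi1 : Integrable fun w => dbar φ w * k w :=
      (hdc.mul hkc.continuous).integrable_of_hasCompactSupport hds.mul_right
    have hi2 : Integrable fun w => φ w * dbar k w :=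
      (hφ.continuous.mul (dbar_continuous hkc)).integrable_of_hasCompactSupport hs.mul_right
    rw [integral_add hi1 hi2] at h0
    rw [eq_neg_of_add_eq_zero_left h0]
    congr 1
    rw [← integral_add_left_eq_self _ z]
    have hsc := Measure.integral_comp_smul volume (fun u => φ (z + u) * dbar k (z + u)) (s n)
    have hcoef : |(s n ^ Module.finrank ℝ ℂ)⁻¹| = (s n ^ 2)⁻¹ := by
      rw [Complex.finrank_real_complex, abs_of_pos (by positivity)]
    have hker : ∀ v : ℂ, φ (z + s n • v) * dbar k (z + s n • v) = (s n ^ 2)⁻¹ •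
        (φ (z + s n • v) * ((1 / (Complex.normSq v + 1) ^ 2 : ℝ) : ℂ)) := by
      intro v
      have hn : Complex.normSq (s n • v) = s n ^ 2 * Complex.normSq v := by
        rw [Complex.real_smul, Complex.normSq_mul, Complex.normSq_ofReal, sq]
      have hv := normSq_add_pos one_pos v
      have hreal : s n ^ 2 / (s n ^ 2 * Complex.normSq v + s n ^ 2) ^ 2 =
          (s n ^ 2)⁻¹ * (1 / (Complex.normSq v + 1) ^ 2) := by
        have h1 : s n ^ 2 * Complex.normSq v + s n ^ 2 = s n ^ 2 * (Complex.normSq v + 1) := by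
          ring
        have h2 := hs0 n
        rw [h1]
        field_simp
      rw [hkd, add_sub_cancel_left, hn, hreal, Complex.ofReal_mul, mul_left_comm,
        ← Complex.real_smul]
    simp only [hker] at hsc
    rw [hcoef, integral_smul] at hsc
    exact (smul_right_injective ℂ (inv_pos.2 ht).ne' hsc).symm
  have hL : Tendsto (fun n => ∫ w, dbar φ w * cauchyKer (s n ^ 2) (w - z)) atTop
      (𝓝 (∫ w, dbar φ w * (w - z)⁻¹)) := by
    refine tendsto_integral_of_dominated_convergence _ (fun n => ?_) hint.norm (fun n => ?_) ?_
    · have ht : 0 < s n ^ 2 := by have := hs0 n; positivity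
      exact (hdc.mul ((contDiff_cauchyKer ht).continuous.comp
        (continuous_id.sub continuous_const))).aestronglyMeasurable
    · have ht : 0 < s n ^ 2 := by have := hs0 n; positivity
      refine .of_forall fun w => ?_
      rw [norm_mul, norm_mul]
      gcongr
      exact norm_cauchyKer_le ht _
    · filter_upwards [Measure.ae_ne volume z] with w hw
      refine tendsto_const_nhds.mul ?_
      rw [inv_eq_cauchyKer]
      have h1 : Tendsto (fun n => ((Complex.normSq (w - z) + s n ^ 2 : ℝ) : ℂ)) atTop
          (𝓝 ((Complex.normSq (w - z) : ℝ) : ℂ)) := by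
        refine (Complex.continuous_ofReal.tendsto _).comp ?_
        simpa using (hslim.pow 2).const_add (Complex.normSq (w - z))
      exact tendsto_const_nhds.div h1
        (Complex.ofReal_ne_zero.2 (Complex.normSq_pos.2 (sub_ne_zero.2 hw)).ne')
  have hRt : Tendsto (fun n => -∫ v, φ (z + s n • v) *
      ((1 / (Complex.normSq v + 1) ^ 2 : ℝ) : ℂ)) atTop
      (𝓝 (-∫ v : ℂ, φ z * ((1 / (Complex.normSq v + 1) ^ 2 : ℝ) : ℂ))) := by
    refine (tendsto_integral_of_dominated_convergence _ (fun n => ?_)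
      (integrable_normSq_kernel.const_mul M₁) (fun n => ?_) ?_).neg
    · refine AEStronglyMeasurable.mul (Continuous.aestronglyMeasurable ?_)
        (Complex.continuous_ofReal.comp_aestronglyMeasurable
          integrable_normSq_kernel.aestronglyMeasurable)
      exact hφ.continuous.comp (by fun_prop)
    · refine .of_forall fun v => ?_
      rw [norm_mul, Complex.norm_real, Real.norm_of_nonneg (by positivity)]
      gcongr
      exact hM₁ _
    · refine .of_forall fun v => Tendsto.mul_const _ ?_
      have h1 : Tendsto (fun n => z + s n • v) atTop (𝓝 z) := by
        simpa using (hslim.smul_const v).const_add z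
      exact (hφ.continuous.tendsto z).comp h1
  simp only [hstokes] at hL
  rw [tendsto_nhds_unique hL hRt, integral_const_mul, integral_complex_ofReal, pompeiuConst,
    mul_comm]

/-! ### The Cauchy transform of a bounded open set -/

/-- The Cauchy transform of the area measure on `Ω`. -/
def cauchyTransform (Ω : Set ℂ) (z : ℂ) : ℂ := ∫ w in Ω, (w - z)⁻¹

lemma cauchyTransform_eq {Ω : Set ℂ} (hΩ : MeasurableSet Ω) (z : ℂ) :
    cauchyTransform Ω z = ∫ w, Ω.indicator 1 w * (w - z)⁻¹ := by
  rw [cauchyTransform, ← integral_indicator hΩ]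
  congr 1
  ext w
  by_cases hw : w ∈ Ω <;> simp [hw]

lemma integrable_indicator_mul_inv_sub {Ω : Set ℂ} (hΩ : MeasurableSet Ω) (hb : IsBounded Ω)
    (z : ℂ) : Integrable fun w => Ω.indicator (1 : ℂ → ℂ) w * (w - z)⁻¹ := by
  obtain ⟨R, hR⟩ := hb.subset_closedBall 0
  refine integrable_mul_inv_sub (M := 1) (R := R)
    (measurable_one.indicator hΩ).aestronglyMeasurable (fun w => ?_) (fun w hw => ?_) z
  · by_cases hw : w ∈ Ω <;> simp [hw]
  · exact Set.indicator_of_notMem (fun h => hw (hR h)) _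

/-- The Cauchy transform is continuous on the whole plane, being the uniform limit of its
regularizations. -/
lemma continuous_cauchyTransform {Ω : Set ℂ} (hΩ : MeasurableSet Ω) (hb : IsBounded Ω) :
    Continuous (cauchyTransform Ω) := by
  set t : ℕ → ℝ := fun n => 1 / ((n:ℝ) + 1) with htdef
  have ht : ∀ n, 0 < t n := fun n => by positivity
  have hfin : volume Ω ≠ ⊤ := hb.measure_lt_top.ne
  have hint : ∀ z, IntegrableOn (fun w => (w - z)⁻¹) Ω := fun z => by
    rw [← integrable_indicator_iff hΩ]
    refine (integrable_indicator_mul_inv_sub hΩ hb z).congr (.of_forall fun w => ?_)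
    by_cases hw : w ∈ Ω <;> simp [hw]
  have hconst : ∀ n, IntegrableOn (fun _ : ℂ => 1 + (t n)⁻¹) Ω := fun n =>
    integrableOn_const hfin
  have hkc : ∀ n z, Continuous fun w => cauchyKer (t n) (w - z) := fun n z =>
    (contDiff_cauchyKer (ht n)).continuous.comp (continuous_id.sub continuous_const)
  have hki : ∀ n z, IntegrableOn (fun w => cauchyKer (t n) (w - z)) Ω := fun n z =>
    (hconst n).mono' (hkc n z).aestronglyMeasurable
      (.of_forall fun w => norm_cauchyKer_le_const (ht n) _)
  have hcont : ∀ n, Continuous fun z => ∫ w in Ω, cauchyKer (t n) (w - z) := fun n =>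
    continuous_of_dominated (fun z => (hkc n z).aestronglyMeasurable)
      (fun z => .of_forall fun w => norm_cauchyKer_le_const (ht n) _) (hconst n)
      (.of_forall fun w => (contDiff_cauchyKer (ht n)).continuous.comp
        (continuous_const.sub continuous_id))
  have hunif : TendstoUniformly (fun n z => ∫ w in Ω, cauchyKer (t n) (w - z))
      (cauchyTransform Ω) atTop := by
    rw [Metric.tendstoUniformly_iff]
    intro ε hε
    filter_upwards [tendsto_tail.eventually (gt_mem_nhds hε)] with n hn z
    refine lt_of_le_of_lt ?_ hn
    have hti : Integrable fun v : ℂ => t n * (‖v‖ * (‖v‖ ^ 2 + t n))⁻¹ := by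
      refine integrable_tail.mono' (by fun_prop : Measurable _).aestronglyMeasurable ?_
      refine .of_forall fun v => tail_le n v
    rw [dist_eq_norm, cauchyTransform, ← integral_sub (hint z) (hki n z)]
    refine (norm_integral_le_integral_norm _).trans ?_
    simp only [norm_cauchyKer_sub (ht n)]
    have h1 : Integrable fun w : ℂ => t n * (‖w - z‖ * (‖w - z‖ ^ 2 + t n))⁻¹ :=
      hti.comp_sub_right z
    have hpos : ∀ v : ℂ, 0 ≤ t n * (‖v‖ * (‖v‖ ^ 2 + t n))⁻¹ := fun v => by
      have := ht n
      positivity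
    refine (setIntegral_le_integral h1 (.of_forall fun w => hpos _)).trans (le_of_eq ?_)
    exact integral_sub_right_eq_self (fun v : ℂ => t n * (‖v‖ * (‖v‖ ^ 2 + t n))⁻¹) z
  exact hunif.continuous (.of_forall hcont)

/-- A Cauchy potential is holomorphic at points around which its density vanishes. -/
lemma differentiableAt_potential {h : ℂ → ℂ} (hh : Integrable h) {z₀ : ℂ} {ρ : ℝ} (hρ : 0 < ρ)
    (h0 : ∀ w ∈ ball z₀ ρ, h w = 0) :
    DifferentiableAt ℂ (fun z => ∫ w, h w * (w - z)⁻¹) z₀ := by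
  have hρ2 : 0 < ρ / 2 := by positivity
  have hm : ∀ z, AEStronglyMeasurable (fun w => h w * (w - z)⁻¹) := fun z =>
    hh.1.mul (by fun_prop : Measurable fun w : ℂ => (w - z)⁻¹).aestronglyMeasurable
  have hfar : ∀ w, w ∉ ball z₀ ρ → ∀ z ∈ ball z₀ (ρ / 2), ρ / 2 ≤ ‖w - z‖ := by
    intro w hw z hz
    have h1 := dist_triangle w z z₀
    rw [mem_ball] at hw hz
    rw [← dist_eq_norm]
    linarith
  have hbd : ∀ w, ∀ z ∈ ball z₀ (ρ / 2), ∀ k : ℕ,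
      ‖h w * ((w - z) ^ k)⁻¹‖ ≤ ‖h w‖ * ((ρ / 2) ^ k)⁻¹ := by
    intro w z hz k
    by_cases hw : w ∈ ball z₀ ρ
    · simp [h0 w hw]
    rw [norm_mul, norm_inv, norm_pow]
    have := hfar w hw z hz
    gcongr
  refine (hasDerivAt_integral_of_dominated_loc_of_deriv_le (𝕜 := ℂ)
    (F := fun z w => h w * (w - z)⁻¹) (F' := fun z w => h w * ((w - z) ^ 2)⁻¹)
    (bound := fun w => ‖h w‖ * ((ρ / 2) ^ 2)⁻¹) (ball_mem_nhds z₀ hρ2) (.of_forall hm) ?_ ?_ ?_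
    (hh.norm.mul_const _) ?_).2.differentiableAt
  · refine (hh.norm.mul_const ((ρ / 2) ^ 1)⁻¹).mono' (hm z₀) (.of_forall fun w => ?_)
    simpa using hbd w z₀ (mem_ball_self hρ2) 1
  · exact hh.1.mul (by fun_prop : Measurable fun w : ℂ => ((w - z₀) ^ 2)⁻¹).aestronglyMeasurable
  · exact .of_forall fun w z hz => hbd w z hz 2
  · refine .of_forall fun w z hz => ?_
    by_cases hw : w ∈ ball z₀ ρ
    · simpa [h0 w hw] using hasDerivAt_const z (0:ℂ)
    have h1 : w - z ≠ 0 := norm_pos_iff.1 (hρ2.trans_le (hfar w hw z hz))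
    have h2 := ((((hasDerivAt_id z).const_sub w).fun_inv h1).const_mul (h w))
    simpa [div_eq_mul_inv] using! h2

/-- `∂̄` of the Cauchy transform is a constant on `Ω`, so that a multiple of `conj z` corrects it to
a holomorphic function. -/
lemma differentiableAt_cauchyTransform_add {Ω : Set ℂ} (hopen : IsOpen Ω) (hb : IsBounded Ω)
    {z₀ : ℂ} (hz₀ : z₀ ∈ Ω) :
    DifferentiableAt ℂ (fun z => cauchyTransform Ω z + pompeiuConst * conj z) z₀ := by
  obtain ⟨ρ, hρ, hρΩ⟩ := nhds_basis_closedBall.mem_iff.1 (hopen.mem_nhds hz₀)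
  set χ : ContDiffBump z₀ := ⟨ρ / 2, ρ, by positivity, by linarith⟩ with hχ
  set φ : ℂ → ℂ := fun z => (χ z : ℂ) * conj z with hφ
  have hφc : ContDiff ℝ 1 φ :=
    (Complex.ofRealCLM.contDiff.comp χ.contDiff).mul Complex.conjCLE.contDiff
  have hφ0 : ∀ z ∉ closedBall z₀ ρ, φ z = 0 := fun z hz => by
    simp [hφ, χ.zero_of_le_dist (not_le.1 hz).le]
  have hφ1 : ∀ z ∈ ball z₀ (ρ / 2), φ z = conj z := fun z hz => by
    simp only [hφ]
    rw [χ.one_of_mem_closedBall (ball_subset_closedBall hz), Complex.ofReal_one, one_mul]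
  have hφs : HasCompactSupport φ := .intro (isCompact_closedBall z₀ ρ) hφ0
  have hd1 : ∀ z ∈ ball z₀ (ρ / 2), dbar φ z = 1 := fun z hz => by
    refine ((HasWirt.conj_id z).congr ?_).dbar_eq
    filter_upwards [isOpen_ball.mem_nhds hz] with w hw using hφ1 w hw
  have hd0 : ∀ z ∉ closedBall z₀ ρ, dbar φ z = 0 := fun z hz => by
    refine dbar_of_eventually_const (c := 0) ?_
    filter_upwards [isClosed_closedBall.isOpen_compl.mem_nhds hz] with w hw using hφ0 w hw
  have hdc := dbar_continuous hφc
  have hΩi : Integrable (Ω.indicator (1 : ℂ → ℂ)) :=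
    (integrable_indicator_iff hopen.measurableSet).2 (integrableOn_const hb.measure_lt_top.ne)
  have hdi : Integrable (dbar φ) :=
    integrable_of_continuousOn_compact (isCompact_closedBall z₀ ρ) hdc.continuousOn hd0
  have hdi' : ∀ z, Integrable fun w => dbar φ w * (w - z)⁻¹ := fun z => by
    obtain ⟨M, hM⟩ := (isCompact_closedBall z₀ ρ).exists_bound_of_continuousOn hdc.continuousOn
    obtain ⟨R, hR⟩ := (isBounded_closedBall (x := z₀) (r := ρ)).subset_closedBall 0
    refine integrable_mul_inv_sub hdc.aestronglyMeasurable (M := max M 0) (R := R) (fun w => ?_)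
      (fun w hw => hd0 w fun h => hw (hR h)) z
    by_cases hw : w ∈ closedBall z₀ ρ
    · exact (hM w hw).trans (le_max_left _ _)
    · simp [hd0 w hw]
  have hpot : ∀ z, ∫ w, (Ω.indicator 1 w - dbar φ w) * (w - z)⁻¹ =
      cauchyTransform Ω z + pompeiuConst * φ z := by
    intro z
    simp only [sub_mul]
    rw [integral_sub (integrable_indicator_mul_inv_sub hopen.measurableSet hb z) (hdi' z),
      ← cauchyTransform_eq hopen.measurableSet, cauchy_pompeiu hφc hφs, sub_neg_eq_add]
  have hmain := differentiableAt_potential (hΩi.sub hdi) (z₀ := z₀) (ρ := ρ / 2) (by positivity)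
    (fun w hw => by
      have : w ∈ Ω := hρΩ (ball_subset_closedBall (ball_subset_ball (by linarith) hw))
      simp [this, hd1 w hw])
  refine hmain.congr_of_eventuallyEq ?_
  filter_upwards [ball_mem_nhds z₀ (by positivity : 0 < ρ / 2)] with z hz
  simp only [Pi.sub_apply]
  rw [hpot, hφ1 z hz]

/-! ### The Schwarz function of a quadrature domain -/

lemma iteratedDeriv_inv_sub (j : ℕ) (z a : ℂ) :
    iteratedDeriv j (fun w => (w - z)⁻¹) a
      = (-1) ^ j * (j.factorial : ℂ) * ((a - z) ^ (j + 1))⁻¹ := by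
  have h := congrFun (iter_deriv_inv_linear_sub (𝕜 := ℂ) j 1 z) a
  simp only [one_mul, one_pow, mul_one] at h
  rw [iteratedDeriv_eq_iterate, h, ← zpow_natCast (a - z) (j + 1), ← zpow_neg]
  congr 2
  push_cast
  ring

/-- A single polar term is meromorphic at every point: it has a limit after multiplication by
any power of `z - p` exceeding the order of the pole. -/
lemma exists_tendsto_pow_mul_inv (a p : ℂ) {j N : ℕ} (hj : j + 1 ≤ N) :
    ∃ L : ℂ, Tendsto (fun z => (z - p) ^ N * ((a - z) ^ (j + 1))⁻¹) (𝓝[≠] p) (𝓝 L) := by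
  by_cases hap : a = p
  · subst hap
    obtain ⟨d, rfl⟩ := Nat.exists_eq_add_of_le hj
    have hc : Continuous fun z : ℂ => (-1) ^ (j + 1) * (z - a) ^ d := by fun_prop
    refine ⟨_, (hc.continuousAt.tendsto.mono_left nhdsWithin_le_nhds).congr' ?_⟩
    filter_upwards [self_mem_nhdsWithin] with z hz
    have hz' : z - a ≠ 0 := sub_ne_zero.mpr hz
    have h1 : (-1 : ℂ) ^ (j + 1) * (-1) ^ (j + 1) = 1 := by rw [← mul_pow]; simp
    rw [show a - z = (-1) * (z - a) by ring, mul_pow, pow_add (z - a), mul_inv,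
      eq_comm, inv_eq_of_mul_eq_one_right h1]
    field_simp
  · have hc : ContinuousAt (fun z : ℂ => (z - p) ^ N * ((a - z) ^ (j + 1))⁻¹) p := by
      refine ContinuousAt.mul (by fun_prop) (ContinuousAt.inv₀ (by fun_prop) ?_)
      exact pow_ne_zero _ (sub_ne_zero.mpr hap)
    exact ⟨_, hc.tendsto.mono_left nhdsWithin_le_nhds⟩

/-- The rational function with poles among the nodes `a k` that a quadrature identity attaches to
its nodes and coefficients: the value of the quadrature
functional on the Cauchy kernel `w ↦ (w - z)⁻¹`. -/
def nodeRational {n : ℕ} (a : Fin n → ℂ) (m : Fin n → ℕ) (c : (k : Fin n) → Fin (m k + 1) → ℂ)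
    (z : ℂ) : ℂ :=
  ∑ k : Fin n, ∑ j : Fin (m k + 1),
    c k j * ((-1) ^ (j : ℕ) * ((j : ℕ).factorial : ℂ) * ((a k - z) ^ ((j : ℕ) + 1))⁻¹)

section
variable {n : ℕ} (a : Fin n → ℂ) (m : Fin n → ℕ) (c : (k : Fin n) → Fin (m k + 1) → ℂ)

lemma differentiableAt_nodeRational {z : ℂ} (hz : ∀ k, z ≠ a k) :
    DifferentiableAt ℂ (nodeRational a m c) z := by
  unfold nodeRational
  refine DifferentiableAt.fun_sum fun k _ => DifferentiableAt.fun_sum fun j _ => ?_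
  refine DifferentiableAt.const_mul (DifferentiableAt.const_mul ?_ _) _
  exact DifferentiableAt.fun_inv (by fun_prop) (pow_ne_zero _ (sub_ne_zero.mpr (hz k).symm))

lemma exists_tendsto_pow_mul_nodeRational (p : ℂ) :
    ∃ L : ℂ, Tendsto (fun z => (z - p) ^ (∑ k, (m k + 1)) * nodeRational a m c z)
      (𝓝[≠] p) (𝓝 L) := by
  have hN : ∀ (k : Fin n) (j : Fin (m k + 1)), (j : ℕ) + 1 ≤ ∑ k, (m k + 1) := fun k j =>
    (Nat.succ_le_of_lt j.2).trans
      (Finset.single_le_sum (f := fun k => m k + 1) (fun _ _ => Nat.zero_le _)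
        (Finset.mem_univ k))
  choose L hL using fun (k : Fin n) (j : Fin (m k + 1)) =>
    exists_tendsto_pow_mul_inv (a k) p (hN k j)
  refine ⟨∑ k, ∑ j, c k j * ((-1) ^ (j : ℕ) * ((j : ℕ).factorial : ℂ)) * L k j, ?_⟩
  refine (tendsto_finsetSum _ fun k _ => tendsto_finsetSum _ fun j _ =>
    (hL k j).const_mul (c k j * ((-1) ^ (j : ℕ) * ((j : ℕ).factorial : ℂ)))).congr fun z => ?_
  simp only [nodeRational, Finset.mul_sum]
  refine Finset.sum_congr rfl fun k _ => Finset.sum_congr rfl fun j _ => ?_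
  ring

end

lemma memA_inv_sub {Ω : Set ℂ} {z : ℂ} (hz : z ∉ closure Ω) : MemA Ω fun w => (w - z)⁻¹ := by
  have hne : ∀ w ∈ closure Ω, w - z ≠ 0 := fun w hw h => hz (sub_eq_zero.mp h ▸ hw)
  refine ⟨ContinuousOn.inv₀ (by fun_prop) hne, fun w hw => ?_⟩
  exact DifferentiableAt.fun_inv (by fun_prop) (hne w (subset_closure hw))

/-- A quadrature domain which is the interior of its closure has a Schwarz function, namely
`conj z + (C z - R z) / κ` with `C` the Cauchy transform of `Ω`, `R` the rational function of
the quadrature identity and `κ` the constant in the Cauchy–Pompeiu formula. -/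
theorem hasSchwarzFunction_of_isBoundedQD {Ω : Set ℂ} (hb : IsBounded Ω) (hopen : IsOpen Ω)
    (hint : interior (closure Ω) = Ω) (hΩ : IsBoundedQD Ω) : HasSchwarzFunction Ω := by
  obtain ⟨n, -, a, ha, m, c, hq⟩ := hΩ
  have hC := continuous_cauchyTransform hopen.measurableSet hb
  have hκ : (pompeiuConst : ℂ) ≠ 0 := by exact_mod_cast pompeiuConst_pos.ne'
  have hext : ∀ z ∉ closure Ω, cauchyTransform Ω z = nodeRational a m c z := fun z hz => by
    rw [cauchyTransform, hq _ (memA_inv_sub hz)]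
    simp only [iteratedDeriv_inv_sub, nodeRational]
  -- `interior (closure Ω) = Ω` makes every frontier point a limit of exterior points, so
  -- `C = R` extends to the frontier by continuity
  have hfr : ∀ w ∈ frontier Ω, cauchyTransform Ω w = nodeRational a m c w := fun w hw => by
    have hwΩ : w ∉ Ω := by
      rw [hopen.frontier_eq] at hw
      exact hw.2
    have hwc : w ∈ closure (closure Ω)ᶜ := by
      rw [closure_compl, hint]
      exact hwΩ
    have hR : ContinuousAt (nodeRational a m c) w :=
      (differentiableAt_nodeRational a m c (z := w) fun k h => hwΩ (h ▸ ha k)).continuousAt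
    have : (𝓝[(closure Ω)ᶜ] w).NeBot := mem_closure_iff_nhdsWithin_neBot.mp hwc
    refine tendsto_nhds_unique (l := 𝓝[(closure Ω)ᶜ] w)
      (hC.continuousAt.tendsto.mono_left nhdsWithin_le_nhds)
      ((hR.tendsto.mono_left nhdsWithin_le_nhds).congr' ?_)
    filter_upwards [self_mem_nhdsWithin] with z hz
    exact (hext z hz).symm
  set G : ℂ → ℂ := fun z => cauchyTransform Ω z + pompeiuConst * conj z with hG
  have hGc : Continuous G := hC.add (continuous_const.mul Complex.continuous_conj)
  have hmem : ∀ {z : ℂ}, z ∉ ((Finset.univ.image a : Finset ℂ) : Set ℂ) → ∀ k, z ≠ a k :=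
    fun hz k h => hz (by simp [h])
  refine ⟨fun z => (pompeiuConst : ℂ)⁻¹ * (G z - nodeRational a m c z), Finset.univ.image a,
    ?_, ?_, fun p _ => ?_, ?_, fun w hw => ?_⟩
  · intro p hp
    obtain ⟨k, -, rfl⟩ := Finset.mem_image.mp (Finset.mem_coe.mp hp)
    exact ha k
  · intro z hz
    exact (((differentiableAt_cauchyTransform_add hopen hb hz.1).sub
      (differentiableAt_nodeRational a m c (hmem hz.2))).const_mul _).differentiableWithinAt
  · obtain ⟨L, hL⟩ := exists_tendsto_pow_mul_nodeRational a m c p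
    have h1 : Continuous fun z : ℂ => (z - p) ^ (∑ k, (m k + 1)) * G z := by fun_prop
    refine ⟨∑ k, (m k + 1), _,
      (((h1.continuousAt.tendsto.mono_left nhdsWithin_le_nhds).sub hL).const_mul
        (pompeiuConst : ℂ)⁻¹).congr fun z => ?_⟩
    ring
  · intro z hz
    exact (continuousAt_const.mul (hGc.continuousAt.sub
      (differentiableAt_nodeRational a m c (hmem hz.2)).continuousAt)).continuousWithinAt
  · simp only [hG, hfr w hw]
    field_simp
    ring

/-- Lemma 1.1: a nonempty bounded domain, equal to the interior of its closure, is a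
quadrature domain iff it admits a Schwarz function. -/
theorem boundedQD_iff_schwarzFunction (Ω : Set ℂ)
    (hne : Ω.Nonempty) (hbdd : IsBounded Ω) (hopen : IsOpen Ω)
    (hconn : IsConnected Ω) (hint : interior (closure Ω) = Ω) :
    IsBoundedQD Ω ↔ HasSchwarzFunction Ω :=
  ⟨hasSchwarzFunction_of_isBoundedQD hbdd hopen hint,
    isBoundedQD_of_hasSchwarzFunction hne hbdd hopen⟩
end
end

section
/- Let Ω ⊆ ℂ be a bounded open connected set whose frontier is a Jordan curve, i.e., there exists a continuous injective map from the unit circle {z ∈ ℂ : |z| = 1} onto the frontier of Ω. Let f : ℂ → ℂ be continuous on the closure of Ω and complex-differentiable at every point of Ω. If f is injective on the frontier of Ω, then f is injective on Ω. -/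
/-!
Write `K = closure Ω`. Two facts give the theorem.

*Images of interior and boundary points are disjoint.* The set `f '' K` is compact, `f '' Ω` is
open, so the frontier of `f '' K` lies in the Jordan curve `Γ = f '' frontier Ω`. A compact plane
set whose frontier lies in an arc has empty interior (`interior_eq_empty_of_frontier_subset_arc`):
for an interior point `w` off the arc, `z - w` has a continuous logarithm on the arc, which by
Tietze extends to the plane; gluing its exponential on the set with `z - w` outside gives a
nonvanishing continuous function on `ℂ`, hence one with a logarithm, equal to `z - w` on a large
circle, which is absurd. A proper closed subset of `Γ` lies in an arc, so the frontier of `f '' K`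
is all of `Γ`, and `Γ` misses `f '' Ω`.

*Longest chord.* Among pairs `(a, b) ∈ K × K` with `f a = f b`, take one maximizing `‖b - a‖`.
If `h = b - a ≠ 0`, boundary injectivity and the first fact put every `z ∈ K` with `z + h ∈ K` and
`f z = f (z + h)` in `Ω`, together with `z + h`. Near such a `z` the function
`ζ ↦ f ζ - f (ζ + h)` vanishes identically: otherwise, by Hurwitz's argument, its zero would
survive a slight lengthening of `h` (`eventually_eq_of_maximal_chord`). The set of these `z` is
thus nonempty, compact and open in `ℂ`, which is impossible.
-/

open MeasureTheory Filter Topology Metric Bornology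

noncomputable section

/-- Nonvanishing functions on simply connected spaces have continuous logarithms. -/
theorem exists_continuous_log {A : Type*} [TopologicalSpace A] [SimplyConnectedSpace A]
    [LocallyPathConnectedSpace A] (g : C(A, ℂ)) (hg : ∀ a, g a ≠ 0) :
    ∃ F : C(A, ℂ), ∀ a, Complex.exp (F a) = g a := by
  obtain ⟨a₀⟩ : Nonempty A := inferInstance
  obtain ⟨F, hF, -⟩ := Complex.isCoveringMapOn_exp.existsUnique_continuousMap_lifts g
    (a₀ := a₀) (e₀ := Complex.log (g a₀)) (Complex.exp_log (hg a₀)) (fun a => by simpa using hg a)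
  exact ⟨F, fun a => congrFun hF.2 a⟩

/-- The function `z - w` has no continuous logarithm on a circle around `w`. -/
theorem not_exists_log_on_circle (M : C(ℂ, ℂ)) (w : ℂ) (R : ℝ)
    (h : ∀ t : ℝ, Complex.exp (M (w + R * Complex.exp (t * Complex.I))) =
      R * Complex.exp (t * Complex.I)) : False := by
  -- Both sides lift `t ↦ R * exp (t * I)` through the covering `exp` and agree at `0`.
  have key := Complex.isCoveringMap_exp.eq_of_comp_eq
    (g₁ := fun t : ℝ => M (w + R * Complex.exp (t * Complex.I)))
    (g₂ := fun t : ℝ => M (w + R) + t * Complex.I) (by fun_prop) (by fun_prop)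
    (by
      ext t
      have h0 := h 0
      simp only [Complex.ofReal_zero, zero_mul, Complex.exp_zero, mul_one] at h0
      simp [h t, Complex.exp_add, h0]) 0 (by simp)
  have h2 := congrFun key (2 * Real.pi)
  simp [Complex.exp_two_pi_mul_I] at h2

theorem isClosedEmbedding_arc {β : ℝ → ℂ} (hβ : Continuous β) {a b : ℝ}
    (hinj : Set.InjOn β (Set.Icc a b)) :
    IsClosedEmbedding (fun t : Set.Icc a b => β t) :=
  (hβ.comp continuous_subtype_val).isClosedEmbedding
    (fun s t hst => Subtype.ext (hinj s.2 t.2 hst))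

/-- An arc in the plane contains no disc, since by the intermediate value theorem every continuous
real function on a circle identifies some pair of antipodal points. -/
theorem interior_arc_eq_empty {β : ℝ → ℂ} (hβ : Continuous β) {a b : ℝ}
    (hinj : Set.InjOn β (Set.Icc a b)) : interior (β '' Set.Icc a b) = ∅ := by
  rw [Set.eq_empty_iff_forall_notMem]
  intro p hp
  obtain ⟨φ, hφ⟩ := ContinuousMap.exists_extension' (isClosedEmbedding_arc hβ hinj)
    (⟨Subtype.val, continuous_subtype_val⟩ : C(Set.Icc a b, ℝ))
  have hφ' : ∀ t ∈ Set.Icc a b, φ (β t) = t := fun t ht => congrFun hφ ⟨t, ht⟩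
  have hφinj : Set.InjOn φ (β '' Set.Icc a b) := by
    rintro _ ⟨s, hs, rfl⟩ _ ⟨t, ht, rfl⟩ h
    rw [hφ' s hs, hφ' t ht] at h
    rw [h]
  obtain ⟨r, hr, hball⟩ := Metric.nhds_basis_closedBall.mem_iff.1 (mem_interior_iff_mem_nhds.1 hp)
  have hmem : ∀ t : ℝ, p + r * Complex.exp (t * Complex.I) ∈ β '' Set.Icc a b ∧
      p - r * Complex.exp (t * Complex.I) ∈ β '' Set.Icc a b := by
    intro t
    constructor <;> apply hball <;>
      simp [dist_eq_norm, Complex.norm_exp_ofReal_mul_I, abs_of_pos hr]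
  let ψ : ℝ → ℝ := fun t => φ (p + r * Complex.exp (t * Complex.I)) -
    φ (p - r * Complex.exp (t * Complex.I))
  have hψ : Continuous ψ := by fun_prop
  have hψπ : ψ Real.pi = - ψ 0 := by
    simp [ψ, Complex.exp_pi_mul_I, ← sub_eq_add_neg]
  obtain ⟨t, ht⟩ : (0 : ℝ) ∈ Set.range ψ := by
    rcases le_total (ψ 0) 0 with h0 | h0
    · exact mem_range_of_exists_le_of_exists_ge hψ ⟨0, h0⟩ ⟨Real.pi, by linarith⟩
    · exact mem_range_of_exists_le_of_exists_ge hψ ⟨Real.pi, by linarith⟩ ⟨0, h0⟩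
  have heq := hφinj (hmem t).1 (hmem t).2 (sub_eq_zero.1 ht)
  have h2 : (r : ℂ) * Complex.exp (t * Complex.I) = 0 := by linear_combination heq / 2
  simp [hr.ne', Complex.exp_ne_zero] at h2

/-- An arc does not separate the plane, in the form: a compact set whose frontier lies in an arc
has empty interior. -/
theorem interior_eq_empty_of_frontier_subset_arc {K : Set ℂ} (hK : IsCompact K) {β : ℝ → ℂ}
    (hβ : Continuous β) {a b : ℝ} (hab : a ≤ b) (hinj : Set.InjOn β (Set.Icc a b))
    (hfr : frontier K ⊆ β '' Set.Icc a b) : interior K = ∅ := by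
  by_contra hne
  obtain ⟨w, hwK, hwA⟩ : ∃ w ∈ interior K, w ∉ β '' Set.Icc a b := by
    by_contra! hsub
    have := interior_maximal (show interior K ⊆ β '' Set.Icc a b from hsub) isOpen_interior
    rw [interior_arc_eq_empty hβ hinj] at this
    exact hne (Set.subset_empty_iff.1 this)
  -- The projection to `[a, b]` makes the lifted function globally defined on `ℝ`.
  obtain ⟨ℓ, hℓ⟩ := exists_continuous_log
    (⟨fun t : ℝ => β (Set.projIcc a b hab t) - w, by fun_prop⟩ : C(ℝ, ℂ))
    (fun t => sub_ne_zero.2 fun h => hwA ⟨_, (Set.projIcc a b hab t).2, h⟩)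
  obtain ⟨L, hL⟩ := ContinuousMap.exists_extension' (isClosedEmbedding_arc hβ hinj)
    (⟨fun t => ℓ t, by fun_prop⟩ : C(Set.Icc a b, ℂ))
  have hLA : ∀ z ∈ frontier K, Complex.exp (L z) = z - w := by
    intro z hz
    obtain ⟨t, ht, rfl⟩ := hfr hz
    have h1 : L (β t) = ℓ t := congrFun hL ⟨t, ht⟩
    rw [h1, hℓ t]
    simp [Set.projIcc_of_mem hab ht]
  classical
  let r : ℂ → ℂ := fun z => if z ∈ K then Complex.exp (L z) else z - w
  have hr : Continuous r :=
    Continuous.if (p := fun z => z ∈ K) hLA (by fun_prop) (by fun_prop)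
  have hr0 : ∀ z, r z ≠ 0 := by
    intro z
    by_cases hz : z ∈ K
    · simp [r, hz, Complex.exp_ne_zero]
    · simp only [r, hz, if_false]
      intro h
      exact hz (sub_eq_zero.1 h ▸ interior_subset hwK)
  obtain ⟨M, hM⟩ := exists_continuous_log ⟨r, hr⟩ hr0
  obtain ⟨R, hR⟩ := hK.isBounded.subset_closedBall w
  refine not_exists_log_on_circle M w (|R| + 1) fun t => ?_
  have hout : w + ((|R| + 1 : ℝ) : ℂ) * Complex.exp (t * Complex.I) ∉ K := by
    intro h
    have h1 := hR h
    rw [Metric.mem_closedBall, dist_eq_norm, add_sub_cancel_left, norm_mul,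
      Complex.norm_exp_ofReal_mul_I, Complex.norm_real, Real.norm_eq_abs,
      abs_of_nonneg (by positivity)] at h1
    linarith [le_abs_self R]
  rw [hM]
  change r _ = _
  simp only [r, hout, if_false]
  ring

/-- A compact set with nonempty interior whose frontier lies in a Jordan curve has the whole curve
as its frontier. -/
theorem jordan_subset_frontier {K : Set ℂ} (hK : IsCompact K) (hne : (interior K).Nonempty)
    {g : ℂ → ℂ} (hg : ContinuousOn g (sphere (0 : ℂ) 1)) (hinj : Set.InjOn g (sphere (0 : ℂ) 1))
    (hfr : frontier K ⊆ g '' sphere (0 : ℂ) 1) : g '' sphere (0 : ℂ) 1 ⊆ frontier K := by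
  have hsph : ∀ t : ℝ, Complex.exp (t * Complex.I) ∈ sphere (0 : ℂ) 1 := fun t => by
    simp [Complex.norm_exp_ofReal_mul_I]
  have hexp : ∀ z ∈ sphere (0 : ℂ) 1, ∃ t : ℝ, Complex.exp (t * Complex.I) = z := by
    intro z hz
    refine ⟨z.arg, ?_⟩
    have := Complex.norm_mul_exp_arg_mul_I z
    rw [mem_sphere_zero_iff_norm.1 hz] at this
    simpa using this
  set β : ℝ → ℂ := fun t => g (Complex.exp (t * Complex.I)) with hβdef
  have hβ : Continuous β := hg.comp_continuous (by fun_prop) hsph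
  have hper : Function.Periodic β (2 * Real.pi) := by
    intro t
    simp only [hβdef]
    congr 1
    push_cast
    rw [add_mul, Complex.exp_add, Complex.exp_two_pi_mul_I, mul_one]
  rintro _ ⟨z₀, hz₀, rfl⟩
  by_contra hq
  obtain ⟨t₀, rfl⟩ := hexp z₀ hz₀
  have hnhds : ∀ᶠ t in 𝓝 t₀, β t ∈ (frontier K)ᶜ :=
    hβ.continuousAt.eventually_mem (isClosed_frontier.isOpen_compl.mem_nhds hq)
  obtain ⟨δ', hδ', hball'⟩ := Metric.eventually_nhds_iff.1 hnhds
  obtain ⟨δ, hδ, hδπ, hball⟩ : ∃ δ > 0, δ ≤ Real.pi ∧ ∀ t, |t - t₀| < δ → β t ∉ frontier K :=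
    ⟨min δ' Real.pi, lt_min hδ' Real.pi_pos, min_le_right _ _, fun t ht =>
      hball' (by rw [Real.dist_eq]; exact ht.trans_le (min_le_left _ _))⟩
  refine hne.ne_empty (interior_eq_empty_of_frontier_subset_arc hK hβ
    (a := t₀ + δ) (b := t₀ + 2 * Real.pi - δ) (by linarith) ?_ ?_)
  · intro s hs t ht hst
    have h1 := hinj (hsph s) (hsph t) hst
    obtain ⟨n, hn⟩ := Complex.exp_eq_exp_iff_exists_int.1 h1
    have h2 : s = t + n * (2 * Real.pi) := by
      have := congrArg Complex.im hn
      simpa using this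
    have hπ := Real.pi_pos
    have hn1 : (n : ℝ) < 1 := by
      by_contra! hcon
      nlinarith [hs.1, hs.2, ht.1, ht.2]
    have hn2 : (-1 : ℝ) < n := by
      by_contra! hcon
      nlinarith [hs.1, hs.2, ht.1, ht.2]
    have hn0 : n = 0 := by
      have : n < 1 := by exact_mod_cast hn1
      have : -1 < n := by exact_mod_cast hn2
      omega
    simpa [hn0] using h2
  · intro x hx
    obtain ⟨z, hz, rfl⟩ := hfr hx
    obtain ⟨s', rfl⟩ := hexp z hz
    obtain ⟨s, hs, hss⟩ := hper.exists_mem_Ico (by positivity) s' t₀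
    change β s' ∈ frontier K at hx
    change β s' ∈ _
    rw [hss] at hx ⊢
    refine ⟨s, ⟨?_, ?_⟩, rfl⟩
    · by_contra! hcon
      exact hball s (by rw [abs_lt]; constructor <;> linarith [hs.1]) hx
    · by_contra! hcon
      rw [← hper.sub_eq] at hx
      exact hball _ (by rw [abs_lt]; constructor <;> linarith [hs.2]) hx

/-- Hurwitz-type step: if no chord `[z, z + k]` of `Ω` with `f z = f (z + k)` is longer than `h`,
then a chord in direction `h` with equal end values persists in a whole neighbourhood. -/
theorem eventually_eq_of_maximal_chord {Ω : Set ℂ} (hopen : IsOpen Ω) {f : ℂ → ℂ}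
    (hf : DifferentiableOn ℂ f Ω) {h : ℂ} (hh : h ≠ 0)
    (hmax : ∀ z ∈ Ω, ∀ k, z + k ∈ Ω → f z = f (z + k) → ‖k‖ ≤ ‖h‖)
    {z₀ : ℂ} (hz : z₀ ∈ Ω) (hzh : z₀ + h ∈ Ω) (heq : f z₀ = f (z₀ + h)) :
    ∀ᶠ z in 𝓝 z₀, f z = f (z + h) := by
  have han : AnalyticAt ℂ (fun z => f z - f (z + h)) z₀ := by
    have hA := hf.analyticOnNhd hopen
    exact (hA z₀ hz).sub ((hA (z₀ + h) hzh).comp_of_eq (by fun_prop) rfl)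
  rcases han.eventually_eq_zero_or_eventually_ne_zero with h0 | hne
  · exact h0.mono fun z hz => sub_eq_zero.1 hz
  exfalso
  rw [eventually_nhdsWithin_iff] at hne
  have hΩ1 : ∀ᶠ z in 𝓝 z₀, z ∈ Ω := hopen.mem_nhds hz
  have hΩ2 : ∀ᶠ z in 𝓝 z₀, z + h ∈ Ω :=
    (continuous_add_const h).continuousAt.eventually_mem (hopen.mem_nhds hzh)
  obtain ⟨r₀, hr₀, hb⟩ := Metric.nhds_basis_closedBall.eventually_iff.1
    (hne.and (hΩ1.and hΩ2))
  obtain ⟨r, hr, hrr⟩ : ∃ r > 0, r₀ = 2 * r := ⟨r₀ / 2, by positivity, by ring⟩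
  subst hrr
  have hcont : ContinuousOn f (closedBall (z₀ + h) (2 * r)) := by
    refine hf.continuousOn.mono fun z hz => ?_
    have : z - h ∈ closedBall z₀ (2 * r) := by
      rw [Metric.mem_closedBall, dist_eq_norm] at hz ⊢
      rwa [show z - h - z₀ = z - (z₀ + h) by ring]
    simpa using (hb this).2.2
  have hsub : closedBall z₀ r ⊆ closedBall z₀ (2 * r) := closedBall_subset_closedBall (by linarith)
  have hfc : ContinuousOn f (closedBall z₀ r) :=
    hf.continuousOn.mono fun z hz => (hb (hsub hz)).2.1
  have hmaps : Set.MapsTo (fun z => z + h) (closedBall z₀ r) Ω := fun z hz => (hb (hsub hz)).2.2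
  obtain ⟨p, hp, hpmin⟩ := (isCompact_sphere z₀ r).exists_isMinOn
    (NormedSpace.sphere_nonempty.2 hr.le)
    (f := fun z => ‖f z - f (z + h)‖)
    ((hfc.sub (hf.continuousOn.comp (by fun_prop) hmaps)).norm.mono sphere_subset_closedBall)
  set ε := ‖f p - f (p + h)‖ with hε
  have hεpos : 0 < ε := norm_pos_iff.2
    ((hb (hsub (sphere_subset_closedBall hp))).1 (ne_of_mem_sphere hp hr.ne'))
  have huc := (isCompact_closedBall (z₀ + h) (2 * r)).uniformContinuousOn_of_continuous hcont
  obtain ⟨η, hη, hηf⟩ := Metric.uniformContinuousOn_iff.1 huc (ε / 2) (by positivity)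
  have hhpos : 0 < ‖h‖ := norm_pos_iff.2 hh
  obtain ⟨s, hs, hsη, hsr⟩ : ∃ s : ℝ, 0 < s ∧ s * ‖h‖ < η ∧ s * ‖h‖ < r := by
    refine ⟨min η r / (2 * ‖h‖), by positivity, ?_, ?_⟩ <;>
    · have h1 : min η r / (2 * ‖h‖) * ‖h‖ = min η r / 2 := by field_simp
      have h2 : 0 < min η r := lt_min hη hr
      rw [h1]
      linarith [min_le_left η r, min_le_right η r]
  set k : ℂ := h + s * h with hk
  have hkh : ∀ z, dist (z + h) (z + k) = s * ‖h‖ := by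
    intro z
    rw [dist_add_left, hk, dist_self_add_right, norm_mul, Complex.norm_real, Real.norm_eq_abs,
      abs_of_pos hs]
  have hmem1 : ∀ z ∈ closedBall z₀ r, z + h ∈ closedBall (z₀ + h) (2 * r) := by
    intro z hz
    rw [Metric.mem_closedBall, dist_add_right]
    exact hsub hz
  have hmem2 : ∀ z ∈ closedBall z₀ r, z + k ∈ closedBall (z₀ + h) (2 * r) := by
    intro z hz
    rw [Metric.mem_closedBall] at hz ⊢
    have := dist_triangle (z + k) (z + h) (z₀ + h)
    rw [dist_comm (z + k) (z + h), hkh, dist_add_right] at this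
    linarith
  have hclose : ∀ z ∈ closedBall z₀ r, ‖f (z + h) - f (z + k)‖ < ε / 2 := by
    intro z hz
    rw [← dist_eq_norm]
    exact hηf _ (hmem1 z hz) _ (hmem2 z hz) (by rw [hkh]; exact hsη)
  have hkΩ : ∀ z ∈ closedBall z₀ r, z + k ∈ Ω := by
    intro z hz
    have h1 : z + k - h ∈ closedBall z₀ (2 * r) := by
      have := hmem2 z hz
      rw [Metric.mem_closedBall, dist_eq_norm] at this ⊢
      rwa [show z + k - h - z₀ = z + k - (z₀ + h) by ring]
    simpa using (hb h1).2.2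
  have hnz : ∀ z ∈ closedBall z₀ r, f z - f (z + k) ≠ 0 := by
    intro z hz h0
    have h1 := hmax z (hb (hsub hz)).2.1 k (hkΩ z hz) (sub_eq_zero.1 h0)
    have h2 : ‖k‖ = (1 + s) * ‖h‖ := by
      rw [hk, show h + s * h = ((1 + s : ℝ) : ℂ) * h by push_cast; ring, norm_mul,
        Complex.norm_real, Real.norm_eq_abs, abs_of_pos (by positivity)]
    nlinarith
  -- The maximum principle for the reciprocal: it is small on the circle, large at the centre.
  have hdiff : DifferentiableOn ℂ (fun z => (f z - f (z + k))⁻¹) (closedBall z₀ r) := by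
    refine DifferentiableOn.inv (DifferentiableOn.sub ?_ ?_) hnz
    · exact hf.mono fun z hz => (hb (hsub hz)).2.1
    · exact hf.comp (by fun_prop) hkΩ
  have hdc : DiffContOnCl ℂ (fun z => (f z - f (z + k))⁻¹) (ball z₀ r) := by
    refine DifferentiableOn.diffContOnCl ?_
    rwa [closure_ball z₀ hr.ne']
  have hbound := Complex.norm_le_of_forall_mem_frontier_norm_le isBounded_ball hdc
    (C := (ε / 2)⁻¹) (fun z hz => by
      rw [frontier_ball z₀ hr.ne'] at hz
      rw [norm_inv]
      refine inv_anti₀ (by positivity) ?_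
      have h1 : ε ≤ ‖f z - f (z + h)‖ := hpmin hz
      have h2 := hclose z (sphere_subset_closedBall hz)
      have h3 := norm_sub_le (f z - f (z + k)) (f (z + h) - f (z + k))
      rw [sub_sub_sub_cancel_right] at h3
      linarith) (subset_closure (mem_ball_self hr))
  have hz₀mem : z₀ ∈ closedBall z₀ r := mem_closedBall_self hr.le
  have hc := hclose z₀ hz₀mem
  have hn := hnz z₀ hz₀mem
  rw [norm_inv, inv_le_inv₀ (norm_pos_iff.2 hn) (by positivity), heq] at hbound
  linarith

/-- Lemma 2.2 ("Darboux's theorem"): an analytic function on a Jordan domain which is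
continuous on the closure and injective on the boundary is injective on the domain. -/
theorem injOn_of_injOn_frontier (Ω : Set ℂ)
    (hopen : IsOpen Ω) (hbdd : IsBounded Ω) (hconn : IsConnected Ω)
    (hJordan : ∃ γ : ℂ → ℂ, ContinuousOn γ (Metric.sphere (0 : ℂ) 1) ∧
      Set.InjOn γ (Metric.sphere (0 : ℂ) 1) ∧
      γ '' Metric.sphere (0 : ℂ) 1 = frontier Ω)
    (f : ℂ → ℂ)
    (hf_cont : ContinuousOn f (closure Ω))
    (hf_diff : ∀ z ∈ Ω, DifferentiableAt ℂ f z)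
    (hf_inj : Set.InjOn f (frontier Ω)) :
    Set.InjOn f Ω := by
  obtain ⟨γ, hγc, hγi, hγr⟩ := hJordan
  have hK : IsCompact (closure Ω) := hbdd.isCompact_closure
  have hfd : DifferentiableOn ℂ f Ω := fun z hz => (hf_diff z hz).differentiableWithinAt
  have hγmem : ∀ z ∈ sphere (0 : ℂ) 1, γ z ∈ frontier Ω := fun z hz => hγr ▸ ⟨z, hz, rfl⟩
  have hclos : ∀ z ∈ closure Ω, z ∈ Ω ∨ z ∈ frontier Ω := by
    intro z hz
    rwa [closure_eq_self_union_frontier] at hz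
  have hfΩ : IsOpen (f '' Ω) := by
    rcases (hfd.analyticOnNhd hopen).is_constant_or_isOpen hconn.isPreconnected with ⟨w, hw⟩ | ho
    · exfalso
      have hcl : ∀ z ∈ closure Ω, f z = w :=
        Set.EqOn.of_subset_closure (g := fun _ => w) hw hf_cont continuousOn_const
          subset_closure subset_rfl
      have h1 : (1 : ℂ) ∈ sphere (0 : ℂ) 1 := by simp
      have h2 : (-1 : ℂ) ∈ sphere (0 : ℂ) 1 := by simp
      have := hγi h1 h2 (hf_inj (hγmem _ h1) (hγmem _ h2)
        ((hcl _ (frontier_subset_closure (hγmem _ h1))).trans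
          (hcl _ (frontier_subset_closure (hγmem _ h2))).symm))
      norm_num at this
    · exact ho Ω subset_rfl hopen
  have hfK : IsCompact (f '' closure Ω) := hK.image_of_continuousOn hf_cont
  have hint : f '' Ω ⊆ interior (f '' closure Ω) :=
    interior_maximal (Set.image_mono subset_closure) hfΩ
  have hfr : frontier (f '' closure Ω) ⊆ (f ∘ γ) '' sphere (0 : ℂ) 1 := by
    rw [Set.image_comp, hγr, hfK.isClosed.frontier_eq]
    rintro _ ⟨⟨z, hz, rfl⟩, hz'⟩
    rcases hclos z hz with h | h
    · exact absurd (hint ⟨z, h, rfl⟩) hz'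
    · exact ⟨z, h, rfl⟩
  have hsub := jordan_subset_frontier hfK ((hconn.nonempty.image f).mono hint)
    (hf_cont.comp hγc fun z hz => frontier_subset_closure (hγmem z hz))
    (hf_inj.comp hγi hγmem) hfr
  rw [Set.image_comp, hγr] at hsub
  have hdisj : ∀ z ∈ Ω, ∀ ζ ∈ frontier Ω, f z ≠ f ζ := by
    intro z hz ζ hζ h
    exact (hsub ⟨ζ, hζ, rfl⟩).2 (h ▸ hint ⟨z, hz, rfl⟩)
  have hinside : ∀ z ∈ closure Ω, ∀ ζ ∈ closure Ω, z ≠ ζ → f z = f ζ → z ∈ Ω ∧ ζ ∈ Ω := by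
    intro z hz ζ hζ hne h
    rcases hclos z hz with h1 | h1 <;> rcases hclos ζ hζ with h2 | h2
    · exact ⟨h1, h2⟩
    · exact absurd h (hdisj z h1 ζ h2)
    · exact absurd h.symm (hdisj ζ h2 z h1)
    · exact absurd (hf_inj h1 h2 h) hne
  intro x hx y hy hxy
  by_contra hxne
  -- A pair of points with equal values at maximal distance.
  have hX : IsCompact ((closure Ω ×ˢ closure Ω) ∩
      (fun p : ℂ × ℂ => f p.1 - f p.2) ⁻¹' {0}) := by
    refine (hK.prod hK).of_isClosed_subset (ContinuousOn.preimage_isClosed_of_isClosed ?_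
      (hK.prod hK).isClosed isClosed_singleton) Set.inter_subset_left
    exact (hf_cont.comp continuousOn_fst fun p hp => hp.1).sub
      (hf_cont.comp continuousOn_snd fun p hp => hp.2)
  obtain ⟨⟨a, b⟩, ⟨⟨ha, hb⟩, hab⟩, hmax⟩ := hX.exists_isMaxOn
    ⟨(x, y), ⟨subset_closure hx, subset_closure hy⟩, sub_eq_zero.2 hxy⟩
    (f := fun p : ℂ × ℂ => dist p.1 p.2) (by fun_prop)
  have hmax' : ∀ z ∈ closure Ω, ∀ ζ ∈ closure Ω, f z = f ζ → dist z ζ ≤ dist a b :=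
    fun z hz ζ hζ h => hmax (show (z, ζ) ∈ _ from ⟨⟨hz, hζ⟩, sub_eq_zero.2 h⟩)
  have habne : a ≠ b := by
    have := hmax' x (subset_closure hx) y (subset_closure hy) hxy
    exact dist_pos.1 ((dist_pos.2 hxne).trans_le this)
  set h := b - a with hh
  have hne : h ≠ 0 := sub_ne_zero.2 habne.symm
  have hmaxh : ∀ z ∈ Ω, ∀ k, z + k ∈ Ω → f z = f (z + k) → ‖k‖ ≤ ‖h‖ := by
    intro z hz k hk hzk
    have := hmax' z (subset_closure hz) _ (subset_closure hk) hzk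
    rwa [dist_self_add_right, dist_comm, dist_eq_norm] at this
  let T : Set ℂ := (closure Ω ∩ (fun z => z + h) ⁻¹' closure Ω) ∩
    (fun z => f z - f (z + h)) ⁻¹' {0}
  have hTclosed : IsClosed T := by
    refine ContinuousOn.preimage_isClosed_of_isClosed ?_
      (isClosed_closure.inter (isClosed_closure.preimage (by fun_prop))) isClosed_singleton
    exact (hf_cont.mono Set.inter_subset_left).sub
      (hf_cont.comp (by fun_prop) fun z hz => hz.2)
  have hTopen : IsOpen T := by
    rw [isOpen_iff_mem_nhds]
    rintro z ⟨⟨hz1, hz2⟩, hz3⟩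
    have hz3' : f z = f (z + h) := sub_eq_zero.1 hz3
    obtain ⟨hzΩ, hzhΩ⟩ := hinside z hz1 (z + h) hz2 (by simpa using hne) hz3'
    filter_upwards [eventually_eq_of_maximal_chord hopen hfd hne hmaxh hzΩ hzhΩ hz3',
      hopen.mem_nhds hzΩ,
      (continuous_add_const h).continuousAt.eventually_mem (hopen.mem_nhds hzhΩ)] with u h1 h2 h3
    exact ⟨⟨subset_closure h2, subset_closure h3⟩, sub_eq_zero.2 h1⟩
  have hTne : T.Nonempty := ⟨a, ⟨ha, by simpa [hh] using hb⟩, by simpa [hh] using hab⟩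
  have hTuniv : T = Set.univ := IsClopen.eq_univ ⟨hTclosed, hTopen⟩ hTne
  have hTc : IsCompact T := hK.of_isClosed_subset hTclosed fun z hz => hz.1.1
  exact noncompact_univ ℂ (hTuniv ▸ hTc)
end
end
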